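/- arXiv:1904.07007 — 2 statements merged into one kernel-verified Lean document; each statement's English description precedes it below -/
import Mathlib

section
/- Let β ∈ (1,2) be a multinacci number. Then the dimension bifurcation set coincides with the set-valued bifurcation set: B_β = E_β. -/
open Set Filter MeasureTheory

/-- The β-transformation `x ↦ βx (mod 1)`. -/
noncomputable def Tbeta (β x : ℝ) : ℝ := Int.fract (β * x)

/-- The survivor set `K_β(t) = {x ∈ [0,1) : T_β^n x ≥ t for all n ≥ 0}`. -/
def Kset (β t : ℝ) : Set ℝ := {x | x ∈ Set.Ico (0 : ℝ) 1 ∧ ∀ n : ℕ, t ≤ (Tbeta β)^[n] x}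

/-- Strict lexicographic order on sequences of naturals. -/
def seqLt (x y : ℕ → ℕ) : Prop := ∃ n, (∀ i, i < n → x i = y i) ∧ x n < y n

/-- Lexicographic order on sequences of naturals. -/
def seqLe (x y : ℕ → ℕ) : Prop := x = y ∨ seqLt x y

/-- The `n`-th iterate of the left shift. -/
def shiftN (n : ℕ) (x : ℕ → ℕ) : ℕ → ℕ := fun i => x (i + n)

/-- The sequence `w 0^∞`. -/
def wordSeq (w : List ℕ) : ℕ → ℕ := fun i => w.getD i 0

/-- The periodic sequence `w^∞`. -/
def perSeq (w : List ℕ) : ℕ → ℕ := fun i => w.getD (i % w.length) 0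

/-- The sequence obtained by concatenating the word `w` with the sequence `x`. -/
def catSeq (w : List ℕ) (x : ℕ → ℕ) : ℕ → ℕ :=
  fun i => if i < w.length then w.getD i 0 else x (i - w.length)

/-- The greedy β-expansion of `t`: the digit `b_{i+1}` is `⌊β T_β^i t⌋`. -/
noncomputable def greedy (β t : ℝ) : ℕ → ℕ := fun i => (⌊β * (Tbeta β)^[i] t⌋).toNat

/-- `d` is the quasi-greedy β-expansion of `1`: the lexicographically largest
sequence in `{0,1}^ℕ` not ending in `0^∞` whose digits sum to `1` in base `β`. -/
def IsQuasiGreedy (β : ℝ) (d : ℕ → ℕ) : Prop :=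
  (∀ i, d i ≤ 1) ∧ (¬ ∃ N, ∀ n, N ≤ n → d n = 0) ∧
  (∑' i : ℕ, (d i : ℝ) / β ^ (i + 1) = 1) ∧
  ∀ e : ℕ → ℕ, (∀ i, e i ≤ 1) → (¬ ∃ N, ∀ n, N ≤ n → e n = 0) →
    (∑' i : ℕ, (e i : ℝ) / β ^ (i + 1) = 1) → seqLe e d

/-- `s = s_1…s_p` is a β-Lyndon word: `s_{i+1}…s_p ≻ s_1…s_{p-i}` for `1 ≤ i < p`
and `σ^n(s^∞) ≺ δ(β)` for all `n ≥ 0`. -/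
def IsBetaLyndon (β : ℝ) (s : List ℕ) : Prop :=
  s ≠ [] ∧ (∀ a ∈ s, a ≤ 1) ∧
  (∀ i, 1 ≤ i → i < s.length →
    seqLt (wordSeq (s.take (s.length - i))) (wordSeq (s.drop i))) ∧
  (∀ d : ℕ → ℕ, IsQuasiGreedy β d → ∀ n : ℕ, seqLt (shiftN n (perSeq s)) d)

/-- Left endpoint `t_L = Σ_{i=1}^p s_i β^{-i}` of the β-Lyndon interval generated by `s`. -/
noncomputable def lyndonLeft (β : ℝ) (s : List ℕ) : ℝ :=
  ∑ i ∈ Finset.range s.length, (s.getD i 0 : ℝ) / β ^ (i + 1)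

/-- Right endpoint `t_R = (β^p/(β^p - 1)) t_L` of the β-Lyndon interval generated by `s`. -/
noncomputable def lyndonRight (β : ℝ) (s : List ℕ) : ℝ :=
  β ^ s.length / (β ^ s.length - 1) * lyndonLeft β s

/-- The union of all β-Lyndon intervals `[t_L, t_R)`. -/
noncomputable def lyndonUnionIco (β : ℝ) : Set ℝ :=
  ⋃ s ∈ {s : List ℕ | IsBetaLyndon β s}, Set.Ico (lyndonLeft β s) (lyndonRight β s)

/-- The symbolic survivor set `K̃_β(t)` with upper bound sequence `d = δ(β)`. -/
def Ktilde (β t : ℝ) (d : ℕ → ℕ) : Set (ℕ → ℕ) :=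
  {x | (∀ i, x i ≤ 1) ∧ ∀ n : ℕ, seqLe (greedy β t) (shiftN n x) ∧ seqLe (shiftN n x) d}

/-- The set-valued bifurcation set `E_β`. -/
def Eset (β : ℝ) : Set ℝ :=
  {t | t ∈ Set.Ico (0 : ℝ) 1 ∧ ∀ t', t < t' → t' < 1 → Kset β t' ≠ Kset β t}

/-- The dimension bifurcation set `B_β`. -/
def Bset (β : ℝ) : Set ℝ :=
  {t | t ∈ Set.Ico (0 : ℝ) 1 ∧ ∀ t', t < t' → t' < 1 → dimH (Kset β t') ≠ dimH (Kset β t)}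

/-- `β` is a multinacci number: `β^{m+1} = β^m + ⋯ + β + 1` for some `m ≥ 1`. -/
def IsMultinacci (β : ℝ) : Prop :=
  ∃ m : ℕ, 1 ≤ m ∧ β ^ (m + 1) = ∑ i ∈ Finset.range (m + 1), β ^ i

def dg (b : Bool) : ℝ := if b then 1 else 0

noncomputable def gw (β : ℝ) : List Bool → ℝ → ℝ
  | [], y => y
  | b :: w, y => (dg b + gw β w y) / β

def Good (β τ : ℝ) : List Bool → Prop
  | [] => True
  | b :: w => Good β τ w ∧ τ ≤ gw β (b :: w) 0 ∧ gw β (b :: w) (1 / β) ≤ 1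

noncomputable def ee (β : ℝ) (j : ℕ) : ℝ := gw β (List.replicate j true) 0

noncomputable def wd (β : ℝ) : ℕ → ℝ → List Bool
  | 0, _ => []
  | n + 1, x => (open Classical in decide (1 / β ≤ x)) :: wd β n (Tbeta β x)

lemma dg_nonneg (b : Bool) : 0 ≤ dg b := by cases b <;> simp [dg]

lemma gw_append (β : ℝ) (v w : List Bool) (y : ℝ) :
    gw β (v ++ w) y = gw β v (gw β w y) := by
  induction v with
  | nil => rfl
  | cons b v ih => simp [gw, ih]

lemma gw_affine {β : ℝ} (hβ : 1 < β) (w : List Bool) (y : ℝ) :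
    gw β w y = gw β w 0 + y / β ^ w.length := by
  induction w with
  | nil => simp [gw]
  | cons b w ih =>
    simp only [gw, List.length_cons]
    rw [ih, pow_succ]
    have : β ≠ 0 := by positivity
    field_simp
    ring

lemma gw_mono {β : ℝ} (hβ : 1 < β) (w : List Bool) {y z : ℝ} (h : y ≤ z) :
    gw β w y ≤ gw β w z := by
  rw [gw_affine hβ w y, gw_affine hβ w z]
  gcongr

lemma gw_strict {β : ℝ} (hβ : 1 < β) (w : List Bool) {y z : ℝ} (h : y < z) :
    gw β w y < gw β w z := by
  rw [gw_affine hβ w y, gw_affine hβ w z]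
  gcongr

lemma gw_nonneg {β : ℝ} (hβ : 1 < β) (w : List Bool) {y : ℝ} (h : 0 ≤ y) :
    0 ≤ gw β w y := by
  induction w with
  | nil => exact h
  | cons b w ih => 
    have := dg_nonneg b
    simp only [gw]; positivity

lemma good_append {β τ : ℝ} (hβ : 1 < β) {v w : List Bool} (hv : Good β τ v) (hw : Good β τ w)
    (h : gw β w (1 / β) ≤ 1 / β) : Good β τ (v ++ w) := by
  induction v with
  | nil => exact hw
  | cons b v ih =>
    obtain ⟨h1, h2, h3⟩ := hv
    refine ⟨ih h1, ?_, ?_⟩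
    · change τ ≤ gw β ((b :: v) ++ w) 0
      rw [gw_append]
      exact h2.trans (gw_mono hβ _ (gw_nonneg hβ _ le_rfl))
    · change gw β ((b :: v) ++ w) (1 / β) ≤ 1
      rw [gw_append]
      exact (gw_mono hβ _ h).trans h3

lemma good_mono {β τ τ' : ℝ} (h : τ ≤ τ') {v : List Bool} (hv : Good β τ' v) : Good β τ v := by
  induction v with
  | nil => trivial
  | cons b v ih => exact ⟨ih hv.1, h.trans hv.2.1, hv.2.2⟩

lemma ee_zero (β : ℝ) : ee β 0 = 0 := rfl
lemma ee_succ (β : ℝ) (j : ℕ) : ee β (j + 1) = (1 + ee β j) / β := by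
  simp [ee, List.replicate_succ, gw, dg]
lemma ee_one (β : ℝ) : ee β 1 = 1 / β := by simp [ee_succ, ee_zero]

lemma ee_lt_succ {β : ℝ} (hβ : 1 < β) (j : ℕ) : ee β j < ee β (j + 1) := by
  induction j with
  | zero => rw [ee_zero, ee_one]; positivity
  | succ j ih => rw [ee_succ β j, ee_succ β (j+1)]; gcongr

lemma ee_strict {β : ℝ} (hβ : 1 < β) : StrictMono (ee β) := strictMono_nat_of_lt_succ (ee_lt_succ hβ)

lemma ee_pow {β : ℝ} (hβ : 1 < β) (j : ℕ) : β ^ j * ee β j = ∑ i ∈ Finset.range j, β ^ i := by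
  induction j with
  | zero => simp [ee_zero]
  | succ j ih =>
    rw [Finset.sum_range_succ, ← ih, ee_succ, pow_succ]
    have : β ≠ 0 := by positivity
    field_simp
    ring

lemma ee_top {β : ℝ} (hβ : 1 < β) {m : ℕ} (h : β ^ (m + 1) = ∑ i ∈ Finset.range (m + 1), β ^ i) :
    ee β (m + 1) = 1 := by
  have := ee_pow hβ (m + 1)
  rw [← h] at this
  have h2 : β ^ (m+1) ≠ 0 := by positivity
  exact mul_left_cancel₀ h2 (by rw [this, mul_one])

lemma ee_m {β : ℝ} (hβ : 1 < β) {m : ℕ} (h : ee β (m + 1) = 1) : ee β m = β - 1 := by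
  rw [ee_succ] at h
  have : β ≠ 0 := by positivity
  field_simp at h
  linarith

lemma gw_rep (β : ℝ) (j k : ℕ) : gw β (List.replicate j true) (ee β k) = ee β (j + k) := by
  rw [ee, ee, ← gw_append, List.replicate_append_replicate]

lemma exists_J {β : ℝ} {m : ℕ} (h : ee β (m + 1) = 1) {x : ℝ} (hx : x ∈ Ico (0:ℝ) 1) :
    ∃ j ≤ m, ee β j ≤ x ∧ x < ee β (j + 1) := by
  classical
  have hex : ∃ j, x < ee β (j + 1) := ⟨m, by rw [h]; exact hx.2⟩
  refine ⟨Nat.find hex, Nat.find_min' hex (by rw [h]; exact hx.2), ?_, Nat.find_spec hex⟩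
  rcases hk : Nat.find hex with _ | k
  · rw [ee_zero]; exact hx.1
  · have := Nat.find_min hex (m := k) (by omega)
    exact not_lt.mp this

lemma T_mem (β x : ℝ) : Tbeta β x ∈ Ico (0:ℝ) 1 := ⟨Int.fract_nonneg _, Int.fract_lt_one _⟩

lemma iter_mem (β : ℝ) {x : ℝ} (hx : x ∈ Ico (0:ℝ) 1) (n : ℕ) : (Tbeta β)^[n] x ∈ Ico (0:ℝ) 1 := by
  cases n with
  | zero => exact hx
  | succ n => rw [Function.iterate_succ_apply']; exact T_mem _ _

lemma T_low {β x : ℝ} (hβ : 1 < β) (hx : 0 ≤ x) (h : x < 1 / β) : Tbeta β x = β * x := by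
  rw [Tbeta, Int.fract_eq_self]
  refine ⟨by positivity, ?_⟩
  rw [lt_div_iff₀ (by positivity)] at h; linarith

lemma T_high {β x : ℝ} (hβ : 1 < β) (hβ2 : β < 2) (hx : x < 1) (h : 1 / β ≤ x) :
    Tbeta β x = β * x - 1 := by
  rw [div_le_iff₀ (by positivity)] at h
  rw [Tbeta, Int.fract_eq_iff]
  refine ⟨by linarith, by nlinarith, 1, by simp⟩

lemma wd_length (β : ℝ) (n : ℕ) (x : ℝ) : (wd β n x).length = n := by
  induction n generalizing x with
  | zero => rfl
  | succ n ih => simp [wd, ih]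

lemma T_dg {β x : ℝ} (hβ : 1 < β) (hβ2 : β < 2) (hx : x ∈ Ico (0:ℝ) 1) :
    x = ((dg (open Classical in decide (1 / β ≤ x))) + Tbeta β x) / β := by
  have : β ≠ 0 := by positivity
  by_cases h : 1 / β ≤ x
  · rw [T_high hβ hβ2 hx.2 h]; simp only [h, dg]; field_simp; simp
  · rw [T_low hβ hx.1 (not_le.mp h)]; simp only [h, dg]; field_simp; simp

lemma wd_spec {β : ℝ} (hβ : 1 < β) (hβ2 : β < 2) (n : ℕ) {x : ℝ} (hx : x ∈ Ico (0:ℝ) 1) :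
    gw β (wd β n x) ((Tbeta β)^[n] x) = x := by
  induction n generalizing x with
  | zero => rfl
  | succ n ih =>
    rw [Function.iterate_succ_apply, wd, gw, ih (T_mem _ _)]
    exact (T_dg hβ hβ2 hx).symm

lemma wd_add (β : ℝ) (n k : ℕ) (x : ℝ) :
    wd β (n + k) x = wd β n x ++ wd β k ((Tbeta β)^[n] x) := by
  induction n generalizing x with
  | zero => simp [wd]
  | succ n ih =>
    rw [Nat.succ_add, wd, ih, Function.iterate_succ_apply, wd]; rfl

/-- The core extension lemma. -/
lemma core {β τ ε : ℝ} {m : ℕ} (hβ : 1 < β) (hβ2 : β < 2) (hm : ee β (m + 1) = 1) (hε : 0 ≤ ε)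
    {D : List Bool} {j : ℕ} (hj : j ≤ m) (hD : Good β τ D) (hD1 : gw β D (1 / β) ≤ ee β (j + 1))
    (n : ℕ) {x : ℝ} (hx : x ∈ Ico (0:ℝ) 1) (hK : ∀ k, τ + ε ≤ (Tbeta β)^[k] x)
    (h1 : ee β j ≤ (Tbeta β)^[n] x) (h2 : (Tbeta β)^[n] x < ee β (j + 1))
    (hD0 : (Tbeta β)^[n] x - ε ≤ gw β D 0) :
    ∃ i ≤ m, ee β i ≤ x ∧ x < ee β (i + 1) ∧ gw β (wd β n x ++ D) (1 / β) ≤ ee β (i + 1) ∧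
      Good β τ (wd β n x ++ D) ∧ x - ε ≤ gw β (wd β n x ++ D) 0 := by
  induction n generalizing x with
  | zero => exact ⟨j, hj, h1, h2, hD1, hD, hD0⟩
  | succ n ih =>
    have hb0 : 0 < β := by positivity
    rw [Function.iterate_succ_apply] at h1 h2 hD0
    obtain ⟨i, hi, i1, i2, i3, i4, i5⟩ := ih (T_mem β x)
      (fun k => by rw [← Function.iterate_succ_apply]; exact hK _) h1 h2 hD0
    have hle : ∀ i ≤ m + 1, ee β i ≤ 1 := fun i hi => hm ▸ (ee_strict hβ).monotone hi
    have hx0 : τ + ε ≤ x := hK 0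
    set W := wd β n (Tbeta β x) ++ D with hW
    have key : ∀ b : Bool, x = (dg b + Tbeta β x) / β → x - ε ≤ gw β (b :: W) 0 := by
      intro b hb
      simp only [gw]
      rw [le_div_iff₀ hb0]
      rw [eq_div_iff hb0.ne'] at hb
      nlinarith
    by_cases h : 1 / β ≤ x
    · have hwd : wd β (n+1) x ++ D = true :: W := by simp [wd, hW]; simpa using h
      have hT := T_high hβ hβ2 hx.2 h
      have him : i < m := by
        have : ee β i < ee β m := by
          rw [ee_m hβ hm]; nlinarith [hx.2]
        exact (ee_strict hβ).lt_iff_lt.mp this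
      have hxT : x = (1 + Tbeta β x) / β := by rw [hT]; field_simp; ring
      have k := key true (by simpa [dg] using hxT)
      have up : gw β (true :: W) (1 / β) ≤ ee β (i + 1 + 1) := by
        rw [ee_succ β (i+1)]; simp only [gw, dg, if_true]; gcongr
      rw [hwd]
      refine ⟨i + 1, him, ?_, ?_, up, ⟨i4, by linarith, up.trans (hle _ (by omega))⟩, k⟩
      · rw [hxT, ee_succ]; gcongr
      · rw [hxT, ee_succ β (i+1)]; gcongr
    · have hwd : wd β (n+1) x ++ D = false :: W := by simp [wd, hW] ; simpa using h
      have h' := not_le.mp h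
      have hT := T_low hβ hx.1 h'
      have hxT : x = (0 + Tbeta β x) / β := by rw [hT]; field_simp; ring
      have k := key false (by simpa [dg] using hxT)
      have up : gw β (false :: W) (1 / β) ≤ 1 / β := by
        simp [gw, dg]
        have := i3.trans (hle _ (by omega))
        rw [inv_eq_one_div]; rw [one_div] at this ; gcongr; simpa using this
      rw [hwd]
      refine ⟨0, by omega, by rw [ee_zero]; exact hx.1, by rwa [zero_add, ee_one], by rwa [zero_add, ee_one], ⟨i4, by linarith, up.trans ?_⟩, k⟩
      rw [div_le_one hb0]; exact hβ.le
def OO (m : ℕ) : ℕ → List Bool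
  | 0 => []
  | q + 1 => (false :: List.replicate m true) ++ OO m q

def DD (m j q : ℕ) : List Bool := List.replicate j true ++ OO m q

def VV (m q i j : ℕ) (v : List Bool) : List Bool :=
  (false :: List.replicate (m - i) true) ++ (v ++ DD m j q)

lemma OO_length (m q : ℕ) : (OO m q).length = q * (m + 1) := by
  induction q with
  | zero => simp [OO]
  | succ q ih => simp [OO, ih]; ring

lemma DD_length (m j q : ℕ) : (DD m j q).length = j + q * (m + 1) := by
  simp [DD, OO_length]

lemma VV_length (m q i j : ℕ) (v : List Bool) :
    (VV m q i j v).length = (m - i) + 1 + (v.length + (j + q * (m + 1))) := by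
  simp [VV, DD_length]; ring

lemma good_ones {β τ : ℝ} {m : ℕ} (hβ : 1 < β) (hm : ee β (m + 1) = 1) (hτ : τ ≤ 1 / β)
    {w : List Bool} (hw : Good β τ w) {i : ℕ} (h : gw β w (1 / β) ≤ ee β (i + 1)) (r : ℕ)
    (hr : r + i ≤ m) : Good β τ (List.replicate r true ++ w) ∧
      gw β (List.replicate r true ++ w) (1 / β) ≤ ee β (r + i + 1) := by
  induction r with
  | zero => exact ⟨by simpa using hw, by simpa using h⟩
  | succ r ih =>
    obtain ⟨h1, h2⟩ := ih (by omega)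
    have up : gw β (true :: (List.replicate r true ++ w)) (1 / β) ≤ ee β (r + 1 + i + 1) := by
      rw [show r + 1 + i + 1 = (r + i + 1) + 1 by ring, ee_succ β (r+i+1)]
      simp only [gw, dg, if_true]; gcongr
    rw [List.replicate_succ, List.cons_append]
    refine ⟨⟨h1, ?_, up.trans (hm ▸ (ee_strict hβ).monotone (by omega))⟩, up⟩
    refine hτ.trans ?_
    simp only [gw, dg, if_true]
    have := gw_nonneg hβ (List.replicate r true ++ w) (le_refl 0)
    gcongr; linarith

lemma tau_le {β : ℝ} (hβ : 1 < β) (hβ2 : β < 2) : 1 - 1 / β < 1 / β := by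
  have : 1 / 2 < 1 / β := by gcongr
  linarith

lemma OO_spec {β τ : ℝ} {m : ℕ} (hβ : 1 < β) (hβ2 : β < 2) (hm : ee β (m + 1) = 1)
    (hτ : τ ≤ 1 - 1 / β) (q : ℕ) :
    Good β τ (OO m q) ∧ gw β (OO m q) (1 / β) = 1 / β := by
  have hb0 : 0 < β := by positivity
  induction q with
  | zero => exact ⟨trivial, rfl⟩
  | succ q ih =>
    have e1 : gw β (false :: List.replicate m true) (1 / β) = 1 / β := by
      simp only [gw, dg]; rw [← ee_one β, gw_rep, hm, ee_one]; simp
    have e2 := good_ones hβ hm (hτ.trans (tau_le hβ hβ2).le) (w := []) trivial (i := 0)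
      (by simp [gw, ee_one]) m (by omega)
    rw [List.append_nil] at e2
    have e3 : Good β τ (false :: List.replicate m true) := by
      refine ⟨e2.1, ?_, ?_⟩
      · have : gw β (false :: List.replicate m true) 0 = (β - 1) / β := by
          rw [← ee_m hβ hm]; simp [gw, dg, ee]
        rw [this]; rw [sub_div, div_self hb0.ne']; exact hτ
      · rw [e1, div_le_one hb0]; exact hβ.le
    refine ⟨good_append hβ e3 ih.1 ih.2.le, ?_⟩
    rw [OO, gw_append, ih.2, e1]

lemma DD_spec {β τ : ℝ} {m : ℕ} (hβ : 1 < β) (hβ2 : β < 2) (hm : ee β (m + 1) = 1)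
    (hτ : τ ≤ 1 - 1 / β) (q : ℕ) {j : ℕ} (hj : j ≤ m) :
    Good β τ (DD m j q) ∧ gw β (DD m j q) (1 / β) = ee β (j + 1) ∧
      ee β (j + 1) - 1 / β ^ q ≤ gw β (DD m j q) 0 := by
  obtain ⟨h1, h2⟩ := OO_spec hβ hβ2 hm hτ q
  have e2 := good_ones hβ hm (hτ.trans (tau_le hβ hβ2).le) h1 (i := 0)
      (by rw [h2, zero_add, ee_one]) j (by omega)
  have e3 : gw β (DD m j q) (1 / β) = ee β (j + 1) := by
    rw [DD, gw_append, h2, ← ee_one, gw_rep]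
  refine ⟨e2.1, e3, ?_⟩
  rw [gw_affine hβ, DD_length] at e3
  have : 1 / β / β ^ (j + q * (m + 1)) ≤ 1 / β ^ q := by
    rw [div_div, ← pow_succ']
    apply one_div_le_one_div_of_le (by positivity)
    apply pow_le_pow_right₀ hβ.le
    nlinarith
  linarith

lemma VV_spec {β t' ε : ℝ} {m q : ℕ} (hβ : 1 < β) (hβ2 : β < 2) (hm : ee β (m + 1) = 1)
    (ht' : t' ≤ 1 - 1 / β) (hε : 0 ≤ ε) (hq : 1 / β ^ q ≤ ε) {x : ℝ} (hx : x ∈ Kset β t') (n : ℕ) :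
    ∃ i ≤ m, ∃ j ≤ m, Good β (t' - ε) (VV m q i j (wd β n x)) ∧
      gw β (VV m q i j (wd β n x)) (1 / β) ≤ 1 / β := by
  have hb0 : 0 < β := by positivity
  obtain ⟨j, hj, j1, j2⟩ := exists_J hm (iter_mem β hx.1 n)
  obtain ⟨d1, d2, d3⟩ := DD_spec (τ := t' - ε) hβ hβ2 hm (by linarith) q hj
  obtain ⟨i, hi, i1, i2, i3, i4, i5⟩ := core hβ hβ2 hm hε hj d1 d2.le n hx.1
    (fun k => by simpa using hx.2 k) j1 j2 (by linarith)
  refine ⟨i, hi, j, hj, ?_⟩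
  obtain ⟨g1, g2⟩ := good_ones hβ hm (by linarith [tau_le hβ hβ2]) i4 i3 (m - i) (by omega)
  rw [show m - i + i + 1 = m + 1 by omega, hm] at g2
  have e : VV m q i j (wd β n x) = false :: (List.replicate (m - i) true ++ (wd β n x ++ DD m j q)) := rfl
  have up : gw β (VV m q i j (wd β n x)) (1 / β) ≤ 1 / β := by
    rw [e]; simp only [gw, dg]; gcongr; simpa using g2
  refine ⟨?_, up⟩
  rw [e] at up ⊢
  refine ⟨g1, ?_, up.trans (by rw [div_le_one hb0]; exact hβ.le)⟩
  have l1 : gw β (List.replicate (m - i) true) (ee β i) - ε ≤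
      gw β (List.replicate (m - i) true) (gw β (wd β n x ++ DD m j q) 0) := by
    rw [gw_affine hβ _ (ee β i), gw_affine hβ _ (gw β (wd β n x ++ DD m j q) 0)]
    have hp : 1 ≤ β ^ (List.replicate (m - i) true).length := one_le_pow₀ hβ.le
    have : (ee β i - gw β (wd β n x ++ DD m j q) 0) / β ^ (List.replicate (m - i) true).length ≤ ε := by
      rw [div_le_iff₀ (by positivity)]
      nlinarith
    rw [sub_div] at this
    linarith
  rw [gw_rep, show m - i + i = m by omega, ee_m hβ hm, ← gw_append] at l1
  simp only [gw, dg]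
  rw [le_div_iff₀ hb0]
  have : (1 - 1 / β) * β = β - 1 := by field_simp
  simp only [Bool.false_eq_true, if_false, zero_add]
  nlinarith

lemma pow_small {β : ℝ} (hβ : 1 < β) {ε : ℝ} (hε : 0 < ε) : ∃ q : ℕ, 1 / β ^ q ≤ ε := by
  obtain ⟨q, hq⟩ := exists_pow_lt_of_lt_one hε (inv_lt_one_of_one_lt₀ hβ)
  exact ⟨q, by rw [one_div, ← inv_pow]; exact hq.le⟩

lemma exists_U {β t τ : ℝ} {m : ℕ} (hβ : 1 < β) (hβ2 : β < 2) (hm : ee β (m + 1) = 1)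
    (ht : t ∈ Kset β t) (ht1 : t ≤ 1 - 1 / β) (hτ : t < τ) :
    ∃ U, Good β t U ∧ gw β U (1 / β) < τ := by
  obtain ⟨l, hl⟩ := pow_small hβ (show 0 < (τ - t) / 2 by linarith)
  obtain ⟨j, hj, j1, j2⟩ := exists_J hm (iter_mem β ht.1 l)
  obtain ⟨q, hq⟩ := pow_small hβ (show 0 < ee β (j + 1) - (Tbeta β)^[l] t by linarith)
  obtain ⟨d1, d2, d3⟩ := DD_spec (τ := t) hβ hβ2 hm ht1 q hj
  obtain ⟨i, hi, i1, i2, i3, i4, i5⟩ := core hβ hβ2 hm le_rfl hj d1 d2.le l ht.1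
    (fun k => by simpa using ht.2 k) j1 j2 (by linarith)
  refine ⟨_, i4, ?_⟩
  have h1 := wd_spec hβ hβ2 l ht.1
  rw [gw_append, d2]
  rw [gw_affine hβ, wd_length] at h1 ⊢
  have h2 : ee β (j + 1) ≤ 1 := hm ▸ (ee_strict hβ).monotone (by omega)
  have h3 : ee β (j + 1) / β ^ l ≤ 1 / β ^ l := by gcongr
  have h4 : 0 ≤ (Tbeta β)^[l] t / β ^ l := div_nonneg (iter_mem β ht.1 l).1 (by positivity)
  linarith
def Blk (β t : ℝ) (L : ℕ) (w : List Bool) : Prop :=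
  w.length = L ∧ Good β t w ∧ gw β w (1 / β) < 1 / β

noncomputable def FF (β : ℝ) : ℕ → (ℕ → List Bool) → ℝ
  | 0, _ => 0
  | n + 1, ω => gw β (ω 0) (FF β n (fun k => ω (k + 1)))

noncomputable def xx (β : ℝ) (L : ℕ) (ω : ℕ → List Bool) : ℝ :=
  ∑' k, gw β (ω k) 0 / (β ^ L) ^ k

lemma FF_eq {β t : ℝ} (hβ : 1 < β) {L : ℕ} (n : ℕ) {ω : ℕ → List Bool} (h : ∀ k, Blk β t L (ω k)) :
    FF β n ω = ∑ k ∈ Finset.range n, gw β (ω k) 0 / (β ^ L) ^ k := by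
  induction n generalizing ω with
  | zero => simp [FF]
  | succ n ih =>
    rw [FF, ih (fun k => h (k + 1)), gw_affine hβ, (h 0).1, Finset.sum_range_succ', Finset.sum_div,
      add_comm]
    congr 1
    · apply Finset.sum_congr rfl
      intro k _
      rw [pow_succ, div_div]
    · simp

lemma FF_mem {β t : ℝ} (hβ : 1 < β) {L : ℕ} (n : ℕ) {ω : ℕ → List Bool} (h : ∀ k, Blk β t L (ω k)) :
    FF β n ω ∈ Icc 0 (1 / β) := by
  induction n generalizing ω with
  | zero => exact ⟨le_rfl, by simp only [FF]; positivity⟩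
  | succ n ih =>
    have := ih (fun k => h (k + 1))
    exact ⟨gw_nonneg hβ _ this.1, (gw_mono hβ _ this.2).trans (h 0).2.2.le⟩

lemma xx_summable {β t : ℝ} (hβ : 1 < β) {L : ℕ} (hL : 1 ≤ L) {ω : ℕ → List Bool}
    (h : ∀ k, Blk β t L (ω k)) : Summable fun k => gw β (ω k) 0 / (β ^ L) ^ k := by
  have hp : 1 < β ^ L := one_lt_pow₀ hβ (by omega)
  refine Summable.of_nonneg_of_le (f := fun k => (1 / β ^ L) ^ k) (fun k => ?_) (fun k => ?_) ?_
  · exact div_nonneg (gw_nonneg hβ _ le_rfl) (by positivity)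
  · rw [one_div_pow]
    have : gw β (ω k) 0 ≤ 1 := by
      have h1 := gw_mono hβ (ω k) (show (0:ℝ) ≤ 1 / β by positivity)
      have h2 := (h k).2.2
      have h3 : 1 / β ≤ 1 := by rw [div_le_one (by positivity)]; exact hβ.le
      linarith
    gcongr
  · apply summable_geometric_of_lt_one (by positivity)
    rw [div_lt_one (by positivity)]; exact hp

lemma xx_rec {β t : ℝ} (hβ : 1 < β) {L : ℕ} (hL : 1 ≤ L) {ω : ℕ → List Bool}
    (h : ∀ k, Blk β t L (ω k)) : xx β L ω = gw β (ω 0) (xx β L (fun k => ω (k + 1))) := by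
  rw [gw_affine hβ, (h 0).1, xx, (xx_summable hβ hL h).tsum_eq_zero_add, xx, ← tsum_div_const]
  congr 1
  · simp
  · congr 1; ext k; rw [pow_succ, div_div]

lemma xx_mem {β t : ℝ} (hβ : 1 < β) {L : ℕ} (hL : 1 ≤ L) {ω : ℕ → List Bool}
    (h : ∀ k, Blk β t L (ω k)) : xx β L ω ∈ Icc 0 (1 / β) := by
  have := (xx_summable hβ hL h).hasSum.tendsto_sum_nat
  refine isClosed_Icc.mem_of_tendsto this (Eventually.of_forall fun n => ?_)
  rw [← FF_eq hβ n h]; exact FF_mem hβ n h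

lemma xx_lt {β t : ℝ} (hβ : 1 < β) {L : ℕ} (hL : 1 ≤ L) {ω : ℕ → List Bool}
    (h : ∀ k, Blk β t L (ω k)) : xx β L ω < 1 / β := by
  rw [xx_rec hβ hL h]
  exact (gw_mono hβ _ (xx_mem hβ hL (fun k => h (k + 1))).2).trans_lt (h 0).2.2

lemma gw_mem_K_aux {β t : ℝ} (hβ : 1 < β) {L : ℕ} (hL : 1 ≤ L) (n : ℕ) :
    ∀ {ω : ℕ → List Bool} (_ : ∀ k, Blk β t L (ω k)) {z : List Bool} (_ : Good β t z),
    gw β z (xx β L ω) ∈ Ico (0:ℝ) 1 ∧ t ≤ (Tbeta β)^[n] (gw β z (xx β L ω)) := by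
  have hb0 : 0 < β := by positivity
  have red : ∀ {ω : ℕ → List Bool} (_ : ∀ k, Blk β t L (ω k)) {z : List Bool} (_ : Good β t z),
      ∃ ω' : ℕ → List Bool, ∃ b w, (∀ k, Blk β t L (ω' k)) ∧ Good β t (b :: w) ∧
      gw β z (xx β L ω) = gw β (b :: w) (xx β L ω') := by
    intro ω h z hz
    rcases z with _ | ⟨b, w⟩
    · rcases h0 : ω 0 with _ | ⟨b, w⟩
      · have := (h 0).1; rw [h0] at this; simp at this; omega
      · refine ⟨fun k => ω (k + 1), b, w, fun k => h (k + 1), h0 ▸ (h 0).2.1, ?_⟩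
        rw [← h0, ← xx_rec hβ hL h]; rfl
    · exact ⟨ω, b, w, h, hz, rfl⟩
  have bd : ∀ {ω : ℕ → List Bool} (_ : ∀ k, Blk β t L (ω k)) {z : List Bool} (_ : Good β t z),
      gw β z (xx β L ω) ∈ Ico (0:ℝ) 1 := by
    intro ω h z hz
    obtain ⟨ω', b, w, h', hg, e⟩ := red h hz
    rw [e]
    exact ⟨gw_nonneg hβ _ (xx_mem hβ hL h').1, (gw_strict hβ _ (xx_lt hβ hL h')).trans_le hg.2.2⟩
  induction n with
  | zero =>
    intro ω h z hz
    refine ⟨bd h hz, ?_⟩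
    obtain ⟨ω', b, w, h', hg, e⟩ := red h hz
    rw [e]
    exact hg.2.1.trans (gw_mono hβ _ (xx_mem hβ hL h').1)
  | succ n ih =>
    intro ω h z hz
    refine ⟨bd h hz, ?_⟩
    obtain ⟨ω', b, w, h', hg, e⟩ := red h hz
    rw [e, Function.iterate_succ_apply]
    have : Tbeta β (gw β (b :: w) (xx β L ω')) = gw β w (xx β L ω') := by
      have hb := bd h' hg.1
      simp only [Tbeta, gw]
      rw [mul_div_cancel₀ _ hb0.ne', Int.fract_eq_iff]
      refine ⟨hb.1, hb.2, if b then 1 else 0, ?_⟩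
      cases b <;> simp [dg]
    rw [this]
    exact (ih h' hg.1).2

lemma xx_mem_K {β t : ℝ} (hβ : 1 < β) {L : ℕ} (hL : 1 ≤ L) {ω : ℕ → List Bool}
    (h : ∀ k, Blk β t L (ω k)) : xx β L ω ∈ Kset β t :=
  ⟨(gw_mem_K_aux hβ hL 0 h (z := []) trivial).1, fun n => (gw_mem_K_aux hβ hL n h (z := []) trivial).2⟩

lemma good_le_one {β t : ℝ} (hβ : 1 < β) {w : List Bool} (hw : Good β t w) {y : ℝ} (hy : y ≤ 1 / β) :
    gw β w y ≤ 1 := by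
  cases w with
  | nil => exact hy.trans (by rw [div_le_one (by positivity)]; exact hβ.le)
  | cons b w => exact (gw_mono hβ _ hy).trans hw.2.2

lemma sep {β t c : ℝ} (hβ : 1 < β) (w w' : List Bool) (hl : w.length = w'.length)
    (hne : w ≠ w') (hw : Good β t w) (hw' : Good β t w') {y y' : ℝ} (hy : c ≤ y) (hy' : c ≤ y')
    (hy1 : y ≤ 1 / β) (hy1' : y' ≤ 1 / β) :
    c / β ^ w.length ≤ |gw β w y - gw β w' y'| := by
  have hb0 : 0 < β := by positivity
  have low : ∀ (w : List Bool) {y : ℝ}, c ≤ y → c / β ^ w.length ≤ gw β w y := by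
    intro w y hy
    rw [gw_affine hβ]
    have h1 := gw_nonneg hβ w (le_refl 0)
    have : c / β ^ w.length ≤ y / β ^ w.length := by gcongr
    linarith
  induction w generalizing w' with
  | nil => cases w' with
    | nil => exact absurd rfl hne
    | cons b w => simp at hl
  | cons b w ih =>
    rcases w' with _ | ⟨b', w'⟩
    · simp at hl
    · simp only [List.length_cons, add_left_inj] at hl
      have key : c / β ^ w.length ≤ |dg b + gw β w y - (dg b' + gw β w' y')| := by
        have g1 := good_le_one hβ hw.1 hy1
        have g2 := good_le_one hβ hw'.1 hy1'
        have l1 := low w hy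
        have l2 := low w' hy'
        rw [← hl] at l2
        cases b <;> cases b'
        · simpa [dg] using ih w' hl (by simpa using hne) hw.1 hw'.1
        · simp only [dg]; rw [abs_sub_comm, le_abs]; left; simp; linarith
        · simp only [dg]; rw [le_abs]; left; simp; linarith
        · simpa [dg] using ih w' hl (by simpa using hne) hw.1 hw'.1
      simp only [gw, List.length_cons]
      rw [← sub_div, abs_div, abs_of_pos hb0, pow_succ, ← div_div]
      gcongr

lemma xx_low {β t c : ℝ} (hβ : 1 < β) {L : ℕ} (hL : 1 ≤ L) {ω : ℕ → List Bool}
    (h : ∀ k, Blk β t L (ω k)) (hc : ∀ k, c ≤ gw β (ω k) 0) : c ≤ xx β L ω := by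
  rw [xx_rec hβ hL h]
  exact (hc 0).trans (gw_mono hβ _ (xx_mem hβ hL (fun k => h (k + 1))).1)

lemma xx_sep {β t c : ℝ} (hβ : 1 < β) {L : ℕ} (hL : 1 ≤ L) (k : ℕ) {ω ω' : ℕ → List Bool}
    (h : ∀ k, Blk β t L (ω k)) (hc : ∀ k, c ≤ gw β (ω k) 0)
    (h' : ∀ k, Blk β t L (ω' k)) (hc' : ∀ k, c ≤ gw β (ω' k) 0)
    (heq : ∀ i < k, ω i = ω' i) (hne : ω k ≠ ω' k) :
    c / β ^ L / (β ^ L) ^ k ≤ |xx β L ω - xx β L ω'| := by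
  induction k generalizing ω ω' with
  | zero =>
    rw [xx_rec hβ hL h, xx_rec hβ hL h']
    have := sep hβ _ _ ((h 0).1.trans (h' 0).1.symm) hne (h 0).2.1 (h' 0).2.1
      (xx_low hβ hL (fun k => h (k+1)) (fun k => hc (k+1)))
      (xx_low hβ hL (fun k => h' (k+1)) (fun k => hc' (k+1)))
      (xx_mem hβ hL (fun k => h (k+1))).2 (xx_mem hβ hL (fun k => h' (k+1))).2
    simpa [(h 0).1] using this
  | succ k ih =>
    rw [xx_rec hβ hL h, xx_rec hβ hL h', ← heq 0 (by omega)]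
    rw [gw_affine hβ _ (xx β L _), gw_affine hβ _ (xx β L fun k => ω' (k+1))]
    rw [add_sub_add_left_eq_sub, ← sub_div, abs_div, (h 0).1, abs_of_pos (by positivity : 0 < β ^ L),
      pow_succ, ← div_div]
    gcongr
    exact ih (fun k => h (k+1)) (fun k => hc (k+1)) (fun k => h' (k+1)) (fun k => hc' (k+1))
      (fun i hi => heq (i+1) (by omega)) hne

open scoped NNReal ENNReal

lemma dim_lower {β t c r : ℝ} (hβ : 1 < β) {L M : ℕ} (hL : 1 ≤ L) (hc0 : 0 < c) (hM : 1 < M)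
    (e : Fin M → List Bool) (he : Function.Injective e) (h : ∀ i, Blk β t L (e i))
    (hc : ∀ i, c ≤ gw β (e i) 0) (hr : 0 < r) (hMr : (M : ℝ) = (β ^ L) ^ r) :
    ENNReal.ofReal r ≤ dimH (Kset β t) := by
  set X : (ℕ → Fin M) → ℝ := fun ω => xx β L (fun k => e (ω k)) with hX
  have hp : 0 < β ^ L := by positivity
  have hsep : ∀ ω ω' : ℕ → Fin M, ω ≠ ω' → ∃ k, (∀ i < k, ω i = ω' i) ∧
      c / β ^ L / (β ^ L) ^ k ≤ |X ω - X ω'| := by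
    intro ω ω' hne
    classical
    have hex : ∃ k, ω k ≠ ω' k := Function.ne_iff.mp hne
    refine ⟨Nat.find hex, fun i hi => not_not.mp (Nat.find_min hex hi), ?_⟩
    refine xx_sep hβ hL _ (fun k => h _) (fun k => hc _) (fun k => h _) (fun k => hc _)
      (fun i hi => by rw [not_not.mp (Nat.find_min hex hi)]) ?_
    exact fun hh => Nat.find_spec hex (he hh)
  have hXinj : Function.Injective X := by
    intro ω ω' hh
    by_contra hne
    obtain ⟨k, -, hk⟩ := hsep ω ω' hne
    rw [hh, sub_self, abs_zero] at hk
    have : 0 < c / β ^ L / (β ^ L) ^ k := by positivity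
    linarith
  have : Nonempty (ℕ → Fin M) := ⟨fun _ => ⟨0, by omega⟩⟩
  set f : ℝ → ℝ := fun x => Real.ofDigits (Function.invFun X x) with hf
  have hfX : ∀ ω, f (X ω) = Real.ofDigits ω := fun ω => by
    simp only [hf]; rw [Function.leftInverse_invFun hXinj ω]
  have hc' : 0 < c / β ^ L := by positivity
  have hol : HolderOnWith (Real.toNNReal ((c / β ^ L) ^ (-r))) (Real.toNNReal r) f (range X) := by
    rintro _ ⟨ω, rfl⟩ _ ⟨ω', rfl⟩
    by_cases hne : ω = ω'
    · subst hne; simp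
    obtain ⟨k, hk1, hk2⟩ := hsep ω ω' hne
    rw [hfX, hfX, edist_dist, edist_dist, Real.dist_eq, Real.dist_eq,
      ENNReal.ofReal_rpow_of_nonneg (abs_nonneg _) (by positivity), Real.coe_toNNReal _ hr.le]
    change _ ≤ ENNReal.ofReal _ * _
    rw [← ENNReal.ofReal_mul (by positivity)]
    apply ENNReal.ofReal_le_ofReal
    refine (Real.abs_ofDigits_sub_ofDigits_le hk1).trans ?_
    have h1 : (c / β ^ L / (β ^ L) ^ k) ^ r ≤ |X ω - X ω'| ^ r := by gcongr
    have h2 : (c / β ^ L) ^ (-r) * (c / β ^ L / (β ^ L) ^ k) ^ r = ((M:ℝ) ^ k)⁻¹ := by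
      have h3 : ((β ^ L) ^ k) ^ r = ((β ^ L) ^ r) ^ k := (Real.rpow_pow_comm hp.le r k).symm
      rw [Real.div_rpow hc'.le (by positivity), hMr, Real.rpow_neg hc'.le, h3]
      have : (c / β ^ L) ^ r ≠ 0 := by positivity
      field_simp
    rw [← h2]
    gcongr
  have d1 := hol.dimH_image_le (by simpa using hr)
  have hsub : Icc (0:ℝ) 1 ⊆ f '' range X := by
    intro y hy
    obtain ⟨ω, -, hω⟩ := Real.ofDigits_SurjOn hM hy
    exact ⟨X ω, ⟨ω, rfl⟩, by rw [hfX, hω]⟩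
  have d2 : dimH (Icc (0:ℝ) 1) = 1 := by
    rw [Real.dimH_of_nonempty_interior] <;> simp
  have d3 : (1 : ℝ≥0∞) ≤ dimH (range X) / ENNReal.ofReal r := by
    rw [← d2]; exact (dimH_mono hsub).trans d1
  have d4 : dimH (range X) ≤ dimH (Kset β t) := by
    apply dimH_mono
    rintro _ ⟨ω, rfl⟩
    exact xx_mem_K hβ hL (fun k => h _)
  refine le_trans ?_ d4
  rw [ENNReal.le_div_iff_mul_le (by left; simpa using hr) (by left; simp)] at d3
  simpa using d3
def Lset (β t : ℝ) (n : ℕ) : Set (List Bool) := wd β n '' Kset β t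

lemma Lset_finite (β t : ℝ) (n : ℕ) : (Lset β t n).Finite := by
  refine (List.finite_length_eq Bool n).subset ?_
  rintro _ ⟨x, -, rfl⟩
  exact wd_length β n x

noncomputable def Lfin (β t : ℝ) (n : ℕ) : Finset (List Bool) := (Lset_finite β t n).toFinset

lemma mem_Lfin {β t : ℝ} {n : ℕ} {v : List Bool} : v ∈ Lfin β t n ↔ ∃ x ∈ Kset β t, wd β n x = v := by
  simp [Lfin, Lset]

lemma K_iter {β t x : ℝ} (hx : x ∈ Kset β t) (n : ℕ) : (Tbeta β)^[n] x ∈ Kset β t :=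
  ⟨iter_mem β hx.1 n, fun k => by rw [← Function.iterate_add_apply]; exact hx.2 _⟩

lemma card_add (β t : ℝ) (n k : ℕ) : (Lfin β t (n + k)).card ≤ (Lfin β t n).card * (Lfin β t k).card := by
  classical
  rw [← Finset.card_product]
  refine le_trans (Finset.card_le_card (t := (Lfin β t n ×ˢ Lfin β t k).image (fun p => p.1 ++ p.2)) ?_)
    Finset.card_image_le
  intro v hv
  obtain ⟨x, hx, rfl⟩ := mem_Lfin.mp hv
  rw [wd_add]
  exact Finset.mem_image.mpr ⟨(wd β n x, wd β k ((Tbeta β)^[n] x)), Finset.mem_product.mpr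
    ⟨mem_Lfin.mpr ⟨x, hx, rfl⟩, mem_Lfin.mpr ⟨_, K_iter hx n, rfl⟩⟩, rfl⟩

lemma card_mul (β t : ℝ) (k p : ℕ) : (Lfin β t (k * p)).card ≤ (Lfin β t k).card ^ p := by
  induction p with
  | zero =>
    simp only [mul_zero, pow_zero]
    refine Finset.card_le_one.mpr ?_
    intro a ha b hb
    obtain ⟨x, -, rfl⟩ := mem_Lfin.mp ha
    obtain ⟨y, -, rfl⟩ := mem_Lfin.mp hb
    rfl
  | succ p ih =>
    rw [mul_add, mul_one, pow_succ]
    exact (card_add β t _ _).trans (Nat.mul_le_mul_right _ ih)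

lemma dim_upper {β t s : ℝ} (hβ : 1 < β) (hβ2 : β < 2) {k : ℕ} (hk : 1 ≤ k) (hs : 0 ≤ s)
    (h : ((Lfin β t k).card : ℝ) ≤ (β ^ k) ^ s) : dimH (Kset β t) ≤ ENNReal.ofReal s := by
  have hb0 : 0 < β := by positivity
  have key : Measure.hausdorffMeasure s (Kset β t) ≤ 1 := by
    set r : ℕ → ℝ≥0∞ := fun p => ENNReal.ofReal (1 / (β ^ k) ^ p) with hrdef
    have hr : Tendsto r atTop (nhds 0) := by
      rw [← ENNReal.ofReal_zero]
      apply ENNReal.tendsto_ofReal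
      simp_rw [← one_div_pow]
      apply tendsto_pow_atTop_nhds_zero_of_lt_one (by positivity)
      exact pow_lt_one₀ (by positivity) (by rw [div_lt_one hb0]; exact hβ) (by omega)
    set A : ∀ p : ℕ, (Lfin β t (k * p)) → Set ℝ := fun p v => {x | x ∈ Kset β t ∧ wd β (k * p) x = v.1}
    have hA : ∀ p (v : Lfin β t (k * p)), Metric.ediam (A p v) ≤ r p := by
      intro p v
      apply Metric.ediam_le
      rintro x ⟨hx, hx1⟩ y ⟨hy, hy1⟩
      rw [edist_dist, Real.dist_eq]
      apply ENNReal.ofReal_le_ofReal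
      have e1 := wd_spec hβ hβ2 (k * p) hx.1
      have e2 := wd_spec hβ hβ2 (k * p) hy.1
      have m1 := iter_mem β hx.1 (k * p)
      have m2 := iter_mem β hy.1 (k * p)
      rw [gw_affine hβ, wd_length] at e1 e2
      rw [hx1] at e1
      rw [hy1] at e2
      rw [← e1, ← e2, add_sub_add_left_eq_sub, ← sub_div, abs_div, abs_of_pos (by positivity : 0 < β ^ (k * p)), ← pow_mul]
      gcongr
      rw [abs_le]; constructor <;> linarith [m1.1, m1.2, m2.1, m2.2]
    refine (Measure.hausdorffMeasure_le_liminf_sum s (Kset β t) r hr A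
      (Eventually.of_forall hA) (Eventually.of_forall fun p x hx => ?_)).trans ?_
    · exact mem_iUnion.mpr ⟨⟨wd β (k * p) x, mem_Lfin.mpr ⟨x, hx, rfl⟩⟩, hx, rfl⟩
    · refine (liminf_le_liminf (v := fun _ => (1 : ℝ≥0∞)) (Eventually.of_forall fun p => ?_)).trans ?_
      · refine (Finset.sum_le_sum (g := fun _ => r p ^ s) fun v _ => ?_).trans ?_
        · exact ENNReal.rpow_le_rpow (hA p v) hs
        · rw [Finset.sum_const, nsmul_eq_mul, Finset.card_univ, Fintype.card_coe, hrdef]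
          simp only
          rw [ENNReal.ofReal_rpow_of_nonneg (by positivity) hs, ← ENNReal.ofReal_natCast,
            ← ENNReal.ofReal_mul (by positivity)]
          rw [← ENNReal.ofReal_one]
          apply ENNReal.ofReal_le_ofReal
          rw [Real.div_rpow (by positivity) (by positivity), Real.one_rpow,
            ← Real.rpow_pow_comm (by positivity), mul_one_div, div_le_one (by positivity)]
          calc ((Lfin β t (k * p)).card : ℝ) ≤ ((Lfin β t k).card : ℝ) ^ p := by exact_mod_cast card_mul β t k p
            _ ≤ _ := by gcongr
      · simp
  have : dimH (Kset β t) ≤ (Real.toNNReal s : ℝ≥0∞) := by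
    apply dimH_le_of_hausdorffMeasure_ne_top
    rw [Real.coe_toNNReal _ hs]
    exact (key.trans_lt ENNReal.one_lt_top).ne
  exact this

lemma K_nonempty {β t : ℝ} {m : ℕ} (hβ : 1 < β) (hβ2 : β < 2) (hm1 : 1 ≤ m) (hm : ee β (m + 1) = 1)
    (ht : t < 1 - 1 / β) : (Kset β t).Nonempty := by
  have hb0 : 0 < β := by positivity
  obtain ⟨q, hq⟩ := pow_small hβ (show 0 < 1 - 1 / β - t by linarith)
  obtain ⟨d1, d2, d3⟩ := DD_spec (τ := t) hβ hβ2 hm ht.le q (show m - 1 ≤ m by omega)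
  rw [show m - 1 + 1 = m by omega, ee_m hβ hm] at d2 d3
  have e1 : (β - 1) / β = 1 - 1 / β := by field_simp
  have up : gw β (false :: DD m (m-1) q) (1 / β) = 1 - 1 / β := by
    simp only [gw, dg]; rw [d2, ← e1]; simp
  have hB : Blk β t (false :: DD m (m-1) q).length (false :: DD m (m-1) q) := by
    refine ⟨rfl, ⟨d1, ?_, ?_⟩, ?_⟩
    · simp only [gw, dg, Bool.false_eq_true, if_false, zero_add]
      rw [le_div_iff₀ hb0]
      have e2 : (1 - 1 / β) * β = β - 1 := by field_simp
      nlinarith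
    · rw [up]; linarith [show 0 < 1 / β by positivity]
    · rw [up]; exact tau_le hβ hβ2
  exact ⟨_, xx_mem_K hβ (by simp) (ω := fun _ => false :: DD m (m-1) q) (fun _ => hB)⟩

lemma T_right {β : ℝ} (hβ : 1 < β) (n : ℕ) {t δ : ℝ} (hδ : 0 < δ) :
    ∃ ε > 0, ∀ x, t ≤ x → x < t + ε → (Tbeta β)^[n] t ≤ (Tbeta β)^[n] x ∧
      (Tbeta β)^[n] x < (Tbeta β)^[n] t + δ := by
  induction n generalizing t with
  | zero => exact ⟨δ, hδ, fun x h1 h2 => ⟨h1, h2⟩⟩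
  | succ n ih =>
    have hb0 : 0 < β := by positivity
    obtain ⟨ε, hε, h⟩ := ih (t := Tbeta β t)
    have hT := T_mem β t
    refine ⟨min ε (1 - Tbeta β t) / β, div_pos (lt_min hε (by linarith [hT.2])) hb0, fun x h1 h2 => ?_⟩
    have h3 : β * (x - t) < min ε (1 - Tbeta β t) := by
      have : x - t < min ε (1 - Tbeta β t) / β := by linarith
      rw [lt_div_iff₀ hb0] at this; linarith
    have h4 : 0 ≤ β * (x - t) := mul_nonneg hb0.le (by linarith)
    obtain ⟨h5, h6⟩ := lt_min_iff.mp h3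
    have e : Tbeta β x = Tbeta β t + β * (x - t) := by
      rw [Tbeta, Int.fract_eq_iff]
      refine ⟨by linarith [hT.1], by linarith, ⌊β * t⌋, ?_⟩
      have := Int.self_sub_fract (β * t)
      rw [Tbeta]; linarith
    rw [Function.iterate_succ_apply, Function.iterate_succ_apply]
    exact h _ (by linarith) (by linarith)

lemma E_mem {β t : ℝ} (hβ : 1 < β) (ht : t ∈ Eset β) : t ∈ Kset β t := by
  refine ⟨ht.1, fun n => ?_⟩
  by_contra hn
  push Not at hn
  obtain ⟨ε, hε, h⟩ := T_right hβ n (t := t) (δ := t - (Tbeta β)^[n] t) (by linarith)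
  set η := min ε ((1 - t) / 2) with hη
  have h1t := ht.1.2
  have hη0 : 0 < η := lt_min hε (by linarith)
  have hη1 : η ≤ ε := min_le_left _ _
  have hη2 : η ≤ (1 - t) / 2 := min_le_right _ _
  refine ht.2 (t + η) (by linarith) (by linarith) ?_
  ext x
  refine ⟨fun hx => ⟨hx.1, fun k => by linarith [hx.2 k]⟩, fun hx => ⟨hx.1, fun k => ?_⟩⟩
  by_contra hk
  push Not at hk
  have h1 := (h _ (hx.2 k) (by linarith)).2
  rw [← Function.iterate_add_apply] at h1
  linarith [hx.2 (n + k)]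

lemma E_lt {β t : ℝ} {m : ℕ} (hβ : 1 < β) (hβ2 : β < 2) (hm : ee β (m + 1) = 1)
    (ht : t ∈ Kset β t) : t < 1 - 1 / β := by
  by_contra hcon
  push Not at hcon
  have hb0 : 0 < β := by positivity
  obtain ⟨⟨h0, h1⟩, hK⟩ := ht
  have hlow : t < 1 / β := by
    by_contra h
    push Not at h
    have := hK 1
    simp only [Function.iterate_one] at this
    rw [T_high hβ hβ2 h1 h] at this
    nlinarith
  have hT := T_low hβ h0 hlow
  have e2 : (1 - 1 / β) * β = β - 1 := by field_simp
  have key : ∀ i ≤ m, ee β (m - i) ≤ (Tbeta β)^[i + 1] t ∧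
      1 - (Tbeta β)^[i+1] t = β ^ i * (1 - β * t) + 1 - ee β (m + 1 - i) := by
    intro i hi
    induction i with
    | zero =>
      simp only [Nat.sub_zero, zero_add, Function.iterate_one, hT, hm]
      refine ⟨by rw [ee_m hβ hm]; nlinarith, by ring⟩
    | succ i ih =>
      obtain ⟨i1, i2⟩ := ih (by omega)
      have e3 : ee β (m - i) = (1 + ee β (m - (i+1))) / β := by
        rw [← ee_succ]; congr 1; omega
      have e4 : ee β (m + 1 - i) = (1 + ee β (m + 1 - (i+1))) / β := by
        rw [← ee_succ]; congr 1; omega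
      have e5 : 0 ≤ ee β (m - (i+1)) := by
        rw [← ee_zero β]; exact (ee_strict hβ).monotone (Nat.zero_le _)
      have hmem := iter_mem β (x := t) ⟨h0, h1⟩ (i + 1)
      have hge : 1 / β ≤ (Tbeta β)^[i + 1] t := by
        refine le_trans ?_ i1
        rw [e3]; gcongr; linarith
      rw [Function.iterate_succ_apply' _ (i+1), T_high hβ hβ2 hmem.2 hge]
      rw [eq_div_iff hb0.ne'] at e3 e4
      refine ⟨by nlinarith, ?_⟩
      rw [pow_succ]
      have : (Tbeta β)^[i+1] t = ee β (m + 1 - i) - β ^ i * (1 - β * t) := by linarith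
      rw [this]
      linear_combination (-1) * e4
  obtain ⟨k1, k2⟩ := key m le_rfl
  rw [show m + 1 - m = 1 by omega, ee_one] at k2
  have h5 := hK (m + 1)
  have h6 : 1 ≤ β ^ m := one_le_pow₀ hβ.le
  have h7 : t * β < 1 := by rwa [lt_div_iff₀ hb0] at hlow
  have h8 : 1 / β - t ≥ β ^ m * (1 - β * t) := by linarith
  have h9 : 1 / β - t = (1 - β * t) / β := by field_simp
  rw [h9, ge_iff_le, le_div_iff₀ hb0] at h8
  nlinarith [mul_pos (show 0 < 1 - β * t by linarith) (show 0 < β - 1 by linarith),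
    mul_nonneg (mul_nonneg (show 0 ≤ 1 - β * t by linarith) hb0.le) (sub_nonneg.mpr h6)]

lemma dim_fin (s : Set ℝ) : dimH s ≠ ⊤ := by
  have h : dimH s ≤ 1 := (dimH_mono (subset_univ s)).trans Real.dimH_univ.le
  exact ne_top_of_le_ne_top ENNReal.one_ne_top h

lemma exists_exp {b M : ℝ} (hb : 1 < b) (hM : 0 < M) : ∃ r : ℝ, M = b ^ r :=
  ⟨Real.logb b M, (Real.rpow_logb (by linarith) (by linarith) hM).symm⟩

lemma card_lower {β t : ℝ} (hβ : 1 < β) (hβ2 : β < 2) (hK : (Kset β t).Nonempty) (n : ℕ) :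
    (β ^ n) ^ (dimH (Kset β t)).toReal ≤ ((Lfin β t n).card : ℝ) := by
  have hne : 1 ≤ (Lfin β t n).card := by
    obtain ⟨x, hx⟩ := hK
    exact Finset.card_pos.mpr ⟨_, mem_Lfin.mpr ⟨x, hx, rfl⟩⟩
  have hne' : (1:ℝ) ≤ ((Lfin β t n).card : ℝ) := by exact_mod_cast hne
  rcases Nat.eq_zero_or_pos n with rfl | hn
  · simpa using hne'
  by_contra! hlt
  have hb : 1 < β ^ n := one_lt_pow₀ hβ (by omega)
  obtain ⟨s, hs⟩ := exists_exp hb (show (0:ℝ) < ((Lfin β t n).card : ℝ) by linarith)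
  have hs0 : 0 ≤ s := by
    by_contra! h
    have := Real.rpow_lt_one_of_one_lt_of_neg hb h
    linarith
  have h1 := dim_upper hβ hβ2 hn hs0 hs.le
  rw [hs] at hlt
  have h2 := (Real.rpow_lt_rpow_left_iff hb).mp hlt
  have h3 := ENNReal.toReal_le_of_le_ofReal hs0 h1
  linarith

lemma good_suffix {β τ : ℝ} {v w : List Bool} (h : Good β τ (v ++ w)) : Good β τ w := by
  induction v with
  | nil => exact h
  | cons b v ih => exact ih h.1

lemma good_low {β τ : ℝ} {w : List Bool} (h : Good β τ w) (hw : w ≠ []) : τ ≤ gw β w 0 := by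
  cases w with
  | nil => exact absurd rfl hw
  | cons b w => exact h.2.1

lemma no_shift {β τ : ℝ} (hβ : 1 < β) {A z U B B' : List Bool} (hA : Good β τ (A ++ z))
    (hU : gw β U (1 / β) < τ) (hB : gw β B (1 / β) ≤ 1 / β)
    (h : U ++ B = z ++ (U ++ B')) : z = [] := by
  by_contra hz
  have hb0 : 0 < β := by positivity
  have h1 := good_low (good_suffix hA) hz
  have h2 : gw β (U ++ B) (1 / β) < τ := by
    rw [gw_append]; exact (gw_mono hβ _ hB).trans_lt hU
  have h3 : τ ≤ gw β (z ++ (U ++ B')) (1 / β) := by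
    rw [gw_append]; exact h1.trans (gw_mono hβ _ (gw_nonneg hβ _ (by positivity)))
  rw [h] at h2
  linarith

lemma join_inj {β τ : ℝ} (hβ : 1 < β) {A A' U B B' : List Bool} (hA : Good β τ A)
    (hA' : Good β τ A') (hU : gw β U (1 / β) < τ) (hB : gw β B (1 / β) ≤ 1 / β)
    (hB' : gw β B' (1 / β) ≤ 1 / β)
    (h : A ++ (U ++ B) = A' ++ (U ++ B')) : A = A' ∧ B = B' := by
  rcases List.append_eq_append_iff.mp h with ⟨z, h1, h2⟩ | ⟨z, h1, h2⟩
  · have hz := no_shift hβ (h1 ▸ hA') hU hB h2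
    subst hz
    simp at h1 h2
    exact ⟨h1.symm, h2⟩
  · have hz := no_shift hβ (h1 ▸ hA) hU hB' h2
    subst hz
    simp at h1 h2
    exact ⟨h1, h2.symm⟩

lemma VV_inj {m q i j : ℕ} {v w : List Bool} (h : VV m q i j v = VV m q i j w) : v = w := by
  simpa [VV] using h

lemma main_strict {β t t' : ℝ} {m : ℕ} (hβ : 1 < β) (hβ2 : β < 2) (hm1 : 1 ≤ m)
    (hm : ee β (m + 1) = 1) (ht : t ∈ Kset β t) (h1 : t < t') (h2 : t' < 1 - 1 / β) :
    dimH (Kset β t') < dimH (Kset β t) := by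
  classical
  have hb0 : 0 < β := by positivity
  have hK := K_nonempty hβ hβ2 hm1 hm h2
  have hcard := card_lower hβ hβ2 hK
  have hτβ := tau_le hβ hβ2
  set s := (dimH (Kset β t')).toReal with hs
  have hs0 : 0 ≤ s := ENNReal.toReal_nonneg
  have hds : dimH (Kset β t') = ENNReal.ofReal s := (ENNReal.ofReal_toReal (dim_fin _)).symm
  obtain ⟨q, hq⟩ := pow_small hβ (show 0 < (t' - t) / 2 by linarith)
  obtain ⟨τ, hτ⟩ : ∃ τ, τ = t' - (t' - t) / 2 := ⟨_, rfl⟩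
  have ht0 : 0 ≤ t := ht.1.1
  have hτt : t < τ := by linarith
  obtain ⟨U, hU1, hU2⟩ := exists_U hβ hβ2 hm ht (by linarith) hτt
  have hV : ∀ v : List Bool, ∃ i ≤ m, ∃ j ≤ m, (∃ n, v ∈ Lfin β t' n) →
      Good β τ (VV m q i j v) ∧ gw β (VV m q i j v) (1 / β) ≤ 1 / β := by
    intro v
    by_cases hv : ∃ n, v ∈ Lfin β t' n
    · obtain ⟨n, hn⟩ := hv
      obtain ⟨x, hx, rfl⟩ := mem_Lfin.mp hn
      obtain ⟨i, hi, j, hj, g1, g2⟩ := VV_spec hβ hβ2 hm h2.le (by linarith) hq hx n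
      rw [← hτ] at g1
      exact ⟨i, hi, j, hj, fun _ => ⟨g1, g2⟩⟩
    · exact ⟨0, by omega, 0, by omega, fun h => absurd h hv⟩
  choose I hI J hJ hG using hV
  obtain ⟨C, hC⟩ : ∃ C, C = U.length + 2 * ((m + 1) + m + q * (m + 1)) := ⟨_, rfl⟩
  obtain ⟨H, hH⟩ := exists_nat_gt (((m:ℝ) + 1) ^ 4 * (β ^ C) ^ s)
  let P : Finset (Σ _ : ℕ, List Bool × List Bool) :=
    (Finset.range (H + 1)).sigma (fun n => Lfin β t' n ×ˢ Lfin β t' (H - n))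
  let cl : (Σ _ : ℕ, List Bool × List Bool) → (ℕ × ℕ) × (ℕ × ℕ) :=
    fun p => ((I p.2.1, J p.2.1), (I p.2.2, J p.2.2))
  let R := Finset.range (m + 1)
  let Q : Finset ((ℕ × ℕ) × (ℕ × ℕ)) := (R ×ˢ R) ×ˢ (R ×ˢ R)
  have hQ : (Q.card : ℝ) = ((m:ℝ) + 1) ^ 4 := by
    simp [Q, R, Finset.card_product]; ring
  have hmaps : ∀ p ∈ P, cl p ∈ Q := by
    intro p _
    simp only [cl, Q, R, Finset.mem_product, Finset.mem_range]
    have a1 := hI p.2.1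
    have a2 := hI p.2.2
    have a3 := hJ p.2.1
    have a4 := hJ p.2.2
    omega
  have hP : ((H:ℝ) + 1) * (β ^ H) ^ s ≤ (P.card : ℝ) := by
    simp only [P, Finset.card_sigma, Finset.card_product]
    push_cast
    have : ∀ n ∈ Finset.range (H + 1), (β ^ H) ^ s ≤
        ((Lfin β t' n).card : ℝ) * ((Lfin β t' (H - n)).card : ℝ) := by
      intro n hn
      have hn' : n + (H - n) = H := by have := Finset.mem_range.mp hn; omega
      calc (β ^ H) ^ s = (β ^ n) ^ s * (β ^ (H - n)) ^ s := by
            rw [← Real.mul_rpow (by positivity) (by positivity), ← pow_add, hn']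
        _ ≤ _ := mul_le_mul (hcard n) (hcard _) (Real.rpow_nonneg (pow_nonneg hb0.le _) _) (Nat.cast_nonneg _)
    calc _ = ∑ n ∈ Finset.range (H + 1), (β ^ H) ^ s := by simp
      _ ≤ _ := Finset.sum_le_sum this
  have hpig : ∃ y ∈ Q, (β ^ (H + C)) ^ s < (((P.filter (fun p => cl p = y)).card : ℕ) : ℝ) := by
    by_contra! hno
    have e1 := Finset.card_eq_sum_card_fiberwise hmaps
    have e2 : (P.card : ℝ) ≤ (Q.card : ℝ) * (β ^ (H + C)) ^ s := by
      rw [e1]; push_cast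
      calc _ ≤ ∑ y ∈ Q, (β ^ (H + C)) ^ s := Finset.sum_le_sum hno
        _ = _ := by simp
    rw [hQ, pow_add, Real.mul_rpow (by positivity) (by positivity)] at e2
    have e3 : 0 < (β ^ H) ^ s := by positivity
    have e4 := mul_lt_mul_of_pos_right (hH.trans (lt_add_one (H:ℝ))) e3
    linarith
  obtain ⟨⟨⟨i, j⟩, ⟨i', j'⟩⟩, hy, hbig⟩ := hpig
  simp only [Q, R, Finset.mem_product, Finset.mem_range] at hy
  set F := P.filter (fun p => cl p = ((i, j), (i', j'))) with hF
  have hFm : ∀ p ∈ F, p.1 ≤ H ∧ p.2.1 ∈ Lfin β t' p.1 ∧ p.2.2 ∈ Lfin β t' (H - p.1) ∧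
      I p.2.1 = i ∧ J p.2.1 = j ∧ I p.2.2 = i' ∧ J p.2.2 = j' := by
    intro p hp
    simp only [hF, P, cl, Finset.mem_filter, Finset.mem_sigma, Finset.mem_product, Finset.mem_range,
      Prod.mk.injEq] at hp
    obtain ⟨⟨a, b, c⟩, ⟨d, e⟩, f, g⟩ := hp
    exact ⟨by omega, b, c, d, e, f, g⟩
  have hlen : ∀ {n : ℕ} {v : List Bool}, v ∈ Lfin β t' n → v.length = n := by
    intro n v hv
    obtain ⟨x, _, rfl⟩ := mem_Lfin.mp hv
    exact wd_length _ _ _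
  let W : (Σ _ : ℕ, List Bool × List Bool) → List Bool :=
    fun p => VV m q i j p.2.1 ++ (U ++ VV m q i' j' p.2.2)
  have hGF : ∀ p ∈ F, (Good β τ (VV m q i j p.2.1) ∧ gw β (VV m q i j p.2.1) (1 / β) ≤ 1 / β) ∧
      (Good β τ (VV m q i' j' p.2.2) ∧ gw β (VV m q i' j' p.2.2) (1 / β) ≤ 1 / β) := by
    intro p hp
    obtain ⟨a, b, c, d, e, f, g⟩ := hFm p hp
    have g1 := hG p.2.1 ⟨_, b⟩
    have g2 := hG p.2.2 ⟨_, c⟩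
    rw [d, e] at g1
    rw [f, g] at g2
    exact ⟨g1, g2⟩
  obtain ⟨L, hL⟩ : ∃ L, L = H + (U.length + ((m - i) + 1 + j + q * (m + 1)) +
    ((m - i') + 1 + j' + q * (m + 1))) := ⟨_, rfl⟩
  have hL1 : 1 ≤ L := by omega
  have hLC : L ≤ H + C := by omega
  have hWinj : Set.InjOn W (F : Set (Σ _ : ℕ, List Bool × List Bool)) := by
    intro p hp p' hp' he
    have hp := Finset.mem_coe.mp hp
    have hp' := Finset.mem_coe.mp hp'
    obtain ⟨⟨a1, a2⟩, a3, a4⟩ := hGF p hp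
    obtain ⟨⟨b1, b2⟩, b3, b4⟩ := hGF p' hp'
    obtain ⟨c1, c2⟩ := join_inj hβ a1 b1 hU2 a4 b4 he
    have d1 := VV_inj c1
    have d2 := VV_inj c2
    have l1 := hlen (hFm p hp).2.1
    have l2 := hlen (hFm p' hp').2.1
    obtain ⟨n, v, w⟩ := p
    obtain ⟨n', v', w'⟩ := p'
    simp only at d1 d2 l1 l2
    subst d1 d2
    have : n = n' := l1.symm.trans l2
    subst this
    rfl
  have hWB : ∀ p ∈ F, Blk β t L (W p) ∧ τ ≤ gw β (W p) 0 := by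
    intro p hp
    obtain ⟨⟨a1, a2⟩, a3, a4⟩ := hGF p hp
    obtain ⟨b0, b1, b2, -⟩ := hFm p hp
    have hUV : gw β (U ++ VV m q i' j' p.2.2) (1 / β) < 1 / β := by
      rw [gw_append]
      have := gw_mono hβ U a4
      linarith
    refine ⟨⟨?_, ?_, ?_⟩, ?_⟩
    · simp only [W, List.length_append, VV_length, hlen b1, hlen b2]
      omega
    · exact good_append hβ (good_mono hτt.le a1)
        (good_append hβ hU1 (good_mono hτt.le a3) a4) hUV.le
    · simp only [W]
      rw [gw_append]
      exact (gw_strict hβ _ hUV).trans_le a2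
    · simp only [W]
      rw [gw_append]
      exact (good_low a1 (List.cons_ne_nil _ _)).trans (gw_mono hβ _ (gw_nonneg hβ _ le_rfl))
  have hbL : 1 < β ^ L := one_lt_pow₀ hβ (by omega)
  have hbig' : (β ^ L) ^ s < (F.card : ℝ) :=
    (Real.rpow_le_rpow (by positivity) (pow_le_pow_right₀ hβ.le hLC) hs0).trans_lt hbig
  have hone : 1 ≤ (β ^ L) ^ s := Real.one_le_rpow hbL.le hs0
  have hM : 1 < F.card := by
    have : (1:ℝ) < (F.card : ℝ) := by linarith
    exact_mod_cast this
  obtain ⟨r, hr⟩ := exists_exp hbL (show (0:ℝ) < (F.card : ℝ) by linarith)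
  have hsr : s < r := by
    rw [hr] at hbig'
    exact (Real.rpow_lt_rpow_left_iff hbL).mp hbig'
  have key := dim_lower (t := t) (c := τ) hβ hL1 (by linarith) hM
    (fun a => W (F.equivFin.symm a)) (by
      intro a b hab
      have := hWinj (F.equivFin.symm a).2 (F.equivFin.symm b).2 hab
      exact F.equivFin.symm.injective (Subtype.ext this))
    (fun a => (hWB _ (F.equivFin.symm a).2).1) (fun a => (hWB _ (F.equivFin.symm a).2).2)
    (hs0.trans_lt hsr) hr
  rw [hds]
  exact ((ENNReal.ofReal_lt_ofReal_iff (hs0.trans_lt hsr)).mpr hsr).trans_le key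

/-- For a multinacci `β ∈ (1,2)`, the dimension bifurcation set
coincides with the set-valued bifurcation set: `B_β = E_β`. -/
theorem stmt_0 (β : ℝ) (hβ : β ∈ Set.Ioo (1 : ℝ) 2) (hmulti : IsMultinacci β) :
    Bset β = Eset β := by
  obtain ⟨h1, h2⟩ := hβ
  obtain ⟨m, hm1, hm0⟩ := hmulti
  have hm := ee_top h1 hm0
  ext t
  constructor
  · rintro ⟨ht, h⟩
    exact ⟨ht, fun t' a b e => h t' a b (by rw [e])⟩
  · intro ht
    refine ⟨ht.1, fun t' a _ => ?_⟩
    have hK := E_mem h1 ht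
    have hlt := E_lt h1 h2 hm hK
    have hlt1 : t < min t' ((t + (1 - 1 / β)) / 2) := lt_min a (by linarith)
    have hlt2 : min t' ((t + (1 - 1 / β)) / 2) < 1 - 1 / β :=
      (min_le_right _ _).trans_lt (by linarith)
    have hs := main_strict h1 h2 hm1 hm hK hlt1 hlt2
    have hmono : dimH (Kset β t') ≤ dimH (Kset β (min t' ((t + (1 - 1 / β)) / 2))) :=
      dimH_mono (fun x hx => ⟨hx.1, fun n => (min_le_left _ _).trans (hx.2 n)⟩)
    exact (hmono.trans_lt hs).ne
end

section
/- Let β ∈ (1,2) be a multinacci number. Then B_β = {t ∈ [0,1) : lim_{r→0⁺} dim_H(B_β ∩ (t, t+r)) = dim_H K_β(t) and dim_H K_β(t) > 0}. -/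
open Set Filter MeasureTheory

namespace BT

noncomputable def ww (m : ℕ) (q : ℝ) (k : ℕ) : ℝ := ∑ j ∈ Finset.Ioc k m, q ^ (j + 1)

def LL (x : ℕ → ℕ) (n : ℕ) : ℕ := ∑ i ∈ Finset.range n, (x i + 1)

noncomputable def VV (m : ℕ) (q : ℝ) (x : ℕ → ℕ) : ℝ := ∑' j, q ^ (LL x j) * ww m q (x j)

def Sg (m : ℕ) : Set (ℕ → ℕ) := {x | (∀ i, x i ≤ m) ∧ ∀ N, ∃ n, N ≤ n ∧ x n < m}

def Mt (m : ℕ) (b : ℕ → ℕ) : Set (ℕ → ℕ) := {x | x ∈ Sg m ∧ ∀ i, ¬ seqLt (shiftN i x) b}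

def EE (m : ℕ) : Set (ℕ → ℕ) := {x | x ∈ Sg m ∧ ∀ i, ¬ seqLt (shiftN i x) x}

section order

lemma shift_shift (i j : ℕ) (x : ℕ → ℕ) : shiftN i (shiftN j x) = shiftN (i + j) x := by
  funext n; simp [shiftN, add_assoc]

lemma shift_zero (x : ℕ → ℕ) : shiftN 0 x = x := by funext n; simp [shiftN]

lemma lt_tri {x y : ℕ → ℕ} (h : x ≠ y) : seqLt x y ∨ seqLt y x := by
  classical
  have h' : ∃ n, x n ≠ y n := by
    by_contra hc; push Not at hc; exact h (funext hc)
  have h1 := Nat.find_spec h'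
  have h2 : ∀ i, i < Nat.find h' → x i = y i := fun i hi => by
    have := Nat.find_min h' hi
    push Not at this; exact this
  rcases lt_or_gt_of_ne h1 with h3 | h3
  · exact Or.inl ⟨_, h2, h3⟩
  · exact Or.inr ⟨_, fun i hi => (h2 i hi).symm, h3⟩

lemma lt_irr (x : ℕ → ℕ) : ¬ seqLt x x := by
  rintro ⟨n, _, h⟩; exact lt_irrefl _ h

lemma lt_tr {x y z : ℕ → ℕ} (h1 : seqLt x y) (h2 : seqLt y z) : seqLt x z := by
  obtain ⟨n, a, b⟩ := h1
  obtain ⟨k, c, d⟩ := h2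
  rcases lt_trichotomy n k with h | h | h
  · exact ⟨n, fun i hi => (a i hi).trans (c i (hi.trans h)), by rw [← c n h]; exact b⟩
  · subst h; exact ⟨n, fun i hi => (a i hi).trans (c i hi), b.trans d⟩
  · exact ⟨k, fun i hi => (a i (hi.trans h)).trans (c i hi), by rw [a k h]; exact d⟩

lemma lt_of_nlt_lt {x y z : ℕ → ℕ} (h1 : ¬ seqLt y x) (h2 : seqLt y z) : seqLt x z := by
  by_cases h : x = y
  · rw [h]; exact h2
  · rcases lt_tri h with h | h
    · exact lt_tr h h2
    · exact absurd h h1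

lemma lt_of_lt_nlt {x y z : ℕ → ℕ} (h1 : seqLt x y) (h2 : ¬ seqLt z y) : seqLt x z := by
  by_cases h : y = z
  · rw [← h]; exact h1
  · rcases lt_tri h with h | h
    · exact lt_tr h1 h
    · exact absurd h h2

lemma Sg_shift {m : ℕ} {x : ℕ → ℕ} (hx : x ∈ Sg m) (i : ℕ) : shiftN i x ∈ Sg m := by
  refine ⟨fun j => hx.1 _, fun N => ?_⟩
  obtain ⟨n, h1, h2⟩ := hx.2 (N + i)
  exact ⟨n - i, by omega, by simpa [shiftN, Nat.sub_add_cancel (show i ≤ n by omega)] using h2⟩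

lemma Mt_shift {m : ℕ} {b x : ℕ → ℕ} (hx : x ∈ Mt m b) (i : ℕ) : shiftN i x ∈ Mt m b :=
  ⟨Sg_shift hx.1 i, fun j => by rw [shift_shift]; exact hx.2 _⟩

lemma EE_mem_Mt {m : ℕ} {x b : ℕ → ℕ} (hx : x ∈ EE m) (h : ¬ seqLt x b) : x ∈ Mt m b :=
  ⟨hx.1, fun i hi => hx.2 i (by
    exact lt_of_lt_nlt hi h)⟩

lemma Mt_anti {m : ℕ} {a b : ℕ → ℕ} (h : ¬ seqLt b a) : Mt m b ⊆ Mt m a :=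
  fun x hx => ⟨hx.1, fun i hi => hx.2 i (lt_of_lt_nlt hi h)⟩

end order

section V
variable {m : ℕ} {q : ℝ}

lemma ww_nonneg (hq : 0 < q) (k : ℕ) : 0 ≤ ww m q k :=
  Finset.sum_nonneg fun _ _ => by positivity

lemma ww_le (hq : 0 < q) (hq1 : q < 1) (k : ℕ) : ww m q k ≤ m := by
  unfold ww
  calc _ ≤ ∑ j ∈ Finset.Ioc k m, (1 : ℝ) := Finset.sum_le_sum fun _ _ => pow_le_one₀ hq.le hq1.le
    _ ≤ m := by simp

lemma ww_pos (hq : 0 < q) {k : ℕ} (hk : k < m) : 0 < ww m q k :=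
  Finset.sum_pos (fun _ _ => by positivity) ⟨m, by simp [hk]⟩

lemma ww_self : ww m q m = 0 := by simp [ww]

lemma ww_succ {k : ℕ} (hk : k < m) : ww m q k = q ^ (k + 2) + ww m q (k + 1) := by
  unfold ww
  rw [← Finset.insert_Ioc_add_one_left_eq_Ioc hk, Finset.sum_insert (by simp)]

lemma ww_diff (hq : 0 < q) {k l : ℕ} (h : k < l) (hl : l ≤ m) :
    q ^ (l + 1) ≤ ww m q k - ww m q l := by
  have : insert l (Finset.Ioc l m) ⊆ Finset.Ioc k m := by
    intro j; simp; omega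
  have h2 := Finset.sum_le_sum_of_subset_of_nonneg (f := fun j => q ^ (j + 1)) this
    (fun _ _ _ => by positivity)
  rw [Finset.sum_insert (by simp)] at h2
  unfold ww; linarith

lemma LL_succ (x : ℕ → ℕ) (n : ℕ) : LL x (n + 1) = LL x n + (x n + 1) := by
  simp [LL, Finset.sum_range_succ]

lemma LL_succ' (x : ℕ → ℕ) (n : ℕ) : LL x (n + 1) = (x 0 + 1) + LL (shiftN 1 x) n := by
  simp only [LL, Finset.sum_range_succ', shiftN]; ring

lemma le_LL (x : ℕ → ℕ) (n : ℕ) : n ≤ LL x n := by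
  induction n with
  | zero => simp
  | succ n ih => rw [LL_succ]; omega

lemma LL_congr {x y : ℕ → ℕ} {n : ℕ} (h : ∀ i, i < n → x i = y i) : LL x n = LL y n :=
  Finset.sum_congr rfl fun i hi => by rw [h i (by simpa using hi)]

lemma term_le (hq : 0 < q) (hq1 : q < 1) (x : ℕ → ℕ) (j : ℕ) :
    q ^ (LL x j) * ww m q (x j) ≤ q ^ j * m := by
  have := pow_le_pow_of_le_one hq.le hq1.le (le_LL x j)
  exact mul_le_mul this (ww_le hq hq1 _) (ww_nonneg hq _) (by positivity)

lemma term_nonneg (hq : 0 < q) (x : ℕ → ℕ) (j : ℕ) :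
    0 ≤ q ^ (LL x j) * ww m q (x j) := mul_nonneg (by positivity) (ww_nonneg hq _)

lemma summ_geo (hq : 0 < q) (hq1 : q < 1) : Summable fun j : ℕ => q ^ j * (m : ℝ) :=
  (summable_geometric_of_lt_one hq.le hq1).mul_right _

lemma VV_summable (hq : 0 < q) (hq1 : q < 1) (x : ℕ → ℕ) :
    Summable fun j => q ^ (LL x j) * ww m q (x j) :=
  Summable.of_nonneg_of_le (term_nonneg hq x) (term_le hq hq1 x) (summ_geo hq hq1)

lemma VV_nonneg (hq : 0 < q) (x : ℕ → ℕ) : 0 ≤ VV m q x := tsum_nonneg (term_nonneg hq x)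

lemma VV_le (hq : 0 < q) (hq1 : q < 1) (x : ℕ → ℕ) : VV m q x ≤ m / (1 - q) := by
  have h := (VV_summable hq hq1 x).tsum_le_tsum (term_le (m := m) hq hq1 x) (summ_geo hq hq1)
  rw [tsum_mul_right, tsum_geometric_of_lt_one hq.le hq1] at h
  unfold VV
  rw [div_eq_inv_mul]; exact h

lemma VV_rec (hq : 0 < q) (hq1 : q < 1) (x : ℕ → ℕ) :
    VV m q x = ww m q (x 0) + q ^ (x 0 + 1) * VV m q (shiftN 1 x) := by
  unfold VV
  rw [(VV_summable hq hq1 x).tsum_eq_zero_add, ← tsum_mul_left]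
  congr 1
  · simp [LL]
  · congr 1; funext j
    rw [LL_succ', pow_add]; simp [shiftN, mul_assoc]

lemma VV_pos (hq : 0 < q) (hq1 : q < 1) {x : ℕ → ℕ} (hx : x ∈ Sg m) : 0 < VV m q x := by
  obtain ⟨n, _, h⟩ := hx.2 0
  exact (VV_summable hq hq1 x).tsum_pos (term_nonneg hq x) n (mul_pos (by positivity) (ww_pos hq h))

lemma VV_agree (hq : 0 < q) (hq1 : q < 1) (n : ℕ) : ∀ x y : ℕ → ℕ, (∀ i, i < n → x i = y i) →
    VV m q x - VV m q y = q ^ (LL x n) * (VV m q (shiftN n x) - VV m q (shiftN n y)) := by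
  induction n with
  | zero => intro x y _; simp [LL, shift_zero]
  | succ n ih =>
    intro x y h
    rw [VV_rec hq hq1 x, VV_rec hq hq1 y, ← h 0 (by omega), LL_succ', pow_add q (x 0 + 1)]
    have := ih (shiftN 1 x) (shiftN 1 y) (fun i hi => h (i + 1) (by omega))
    rw [shift_shift, shift_shift] at this
    rw [mul_assoc, ← this]; ring

lemma VV_agree_abs (hq : 0 < q) (hq1 : q < 1) {n : ℕ} {x y : ℕ → ℕ} (h : ∀ i, i < n → x i = y i) :
    |VV m q x - VV m q y| ≤ q ^ (LL x n) * (m / (1 - q)) := by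
  rw [VV_agree hq hq1 n x y h, abs_mul, abs_of_nonneg (by positivity : 0 ≤ q ^ (LL x n))]
  refine mul_le_mul_of_nonneg_left ?_ (by positivity)
  rw [abs_le]
  have h1 := VV_le (m := m) hq hq1 (shiftN n x)
  have h2 := VV_le (m := m) hq hq1 (shiftN n y)
  have h3 := VV_nonneg (m := m) hq (shiftN n x)
  have h4 := VV_nonneg (m := m) hq (shiftN n y)
  constructor <;> linarith

lemma VV_diff (hq : 0 < q) (hq1 : q < 1) {n : ℕ} {x y : ℕ → ℕ} (h : ∀ i, i < n → x i = y i)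
    (hn : x n < y n) (hy : y n ≤ m) :
    q ^ (LL x n) * (q ^ (x n + 1) * VV m q (shiftN (n + 1) x) +
      q ^ (y n + 1) * (1 - VV m q (shiftN (n + 1) y))) ≤ VV m q x - VV m q y := by
  rw [VV_agree hq hq1 n x y h]
  refine mul_le_mul_of_nonneg_left ?_ (by positivity)
  rw [VV_rec hq hq1 (shiftN n x), VV_rec hq hq1 (shiftN n y), shift_shift, shift_shift]
  have e1 : shiftN n x 0 = x n := by simp [shiftN]
  have e2 : shiftN n y 0 = y n := by simp [shiftN]
  rw [e1, e2, add_comm 1 n]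
  have := ww_diff (m := m) hq hn hy
  linarith

/-- sup lemma -/
lemma VV_sup (hq : 0 < q) (hq1 : q < 1) {κ : ℕ → ℕ} (hV : VV m q κ ≤ 1) {x : ℕ → ℕ}
    (hx : x ∈ Mt m κ) : VV m q x ≤ VV m q κ := by
  have key : ∀ y ∈ Mt m κ, y ≠ κ → ∃ z ∈ Mt m κ, ∃ c, 0 ≤ c ∧ c ≤ q ∧
      VV m q y ≤ VV m q κ + c * (VV m q z - 1) := by
    intro y hy hne
    rcases lt_tri hne with h | h
    · exact absurd (by rw [shift_zero]; exact h) (hy.2 0)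
    · obtain ⟨n, h1, h2⟩ := h
      refine ⟨_, Mt_shift hy (n + 1), q ^ (LL κ n) * q ^ (y n + 1), by positivity, ?_, ?_⟩
      · rw [← pow_add]
        exact pow_le_of_le_one hq.le hq1.le (by omega)
      · have := VV_diff hq hq1 h1 h2 (hy.1.1 n)
        have h3 : 0 ≤ q ^ (LL κ n) * (q ^ (κ n + 1) * VV m q (shiftN (n + 1) κ)) :=
          mul_nonneg (by positivity) (mul_nonneg (by positivity) (VV_nonneg hq _))
        linarith
  have hC : 0 ≤ (m : ℝ) / (1 - q) := by
    have : 0 < 1 - q := by linarith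
    positivity
  have step : ∀ n : ℕ, ∀ y ∈ Mt m κ, VV m q y - 1 ≤ (m / (1 - q)) * q ^ n := by
    intro n
    induction n with
    | zero => intro y _; have := VV_le (m := m) hq hq1 y; simp; linarith
    | succ n ih =>
      intro y hy
      have hp : 0 ≤ (m / (1 - q)) * q ^ (n + 1) := by positivity
      by_cases hne : y = κ
      · rw [hne]; linarith
      obtain ⟨z, hz, c, hc0, hc1, hle⟩ := key y hy hne
      have h1 := ih z hz
      have h2 : c * (VV m q z - 1) ≤ q * ((m / (1 - q)) * q ^ n) :=
        (mul_le_mul_of_nonneg_left h1 hc0).trans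
          (mul_le_mul_of_nonneg_right hc1 (by positivity))
      rw [pow_succ]; linarith
  have le1 : ∀ y ∈ Mt m κ, VV m q y ≤ 1 := by
    intro y hy
    have ht : Tendsto (fun n : ℕ => (m / (1 - q)) * q ^ n) atTop (nhds ((m / (1 - q)) * 0)) :=
      (tendsto_pow_atTop_nhds_zero_of_lt_one hq.le hq1).const_mul _
    have := ge_of_tendsto' ht (fun n => step n y hy)
    linarith
  by_cases hne : x = κ
  · rw [hne]
  obtain ⟨z, hz, c, hc0, hc1, hle⟩ := key x hx hne
  have := mul_nonneg hc0 (sub_nonneg.2 (le1 z hz))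
  linarith

lemma EE_self {κ : ℕ → ℕ} (hκ : κ ∈ EE m) : κ ∈ Mt m κ := hκ

lemma VV_strict (hq : 0 < q) (hq1 : q < 1) {κ κ' : ℕ → ℕ} (hκ : κ ∈ Sg m) (hV : VV m q κ ≤ 1)
    (hx : κ' ∈ Mt m κ) (hlt : seqLt κ κ') : VV m q κ' < VV m q κ := by
  obtain ⟨n, h1, h2⟩ := hlt
  have := VV_diff hq hq1 h1 h2 (hx.1.1 n)
  have h3 := (VV_sup hq hq1 hV (Mt_shift hx (n + 1))).trans hV
  have h4 := VV_pos hq hq1 (Sg_shift hκ (n + 1))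
  have h5 : 0 < q ^ (LL κ n) * (q ^ (κ n + 1) * VV m q (shiftN (n + 1) κ) +
      q ^ (κ' n + 1) * (1 - VV m q (shiftN (n + 1) κ'))) := by
    have := sub_nonneg.2 h3
    positivity
  linarith

/-- expansions -/
lemma exp_step (hq : 0 < q) (hW : 1 ≤ ww m q 0 + q) {v : ℝ} (hv : v ∈ Set.Ioc (0 : ℝ) 1) :
    ∃ k, k ≤ m ∧ ∃ v' ∈ Set.Ioc (0 : ℝ) 1, v = ww m q k + q ^ (k + 1) * v' := by
  classical
  have hex : ∃ k, ww m q k < v := ⟨m, by rw [ww_self]; exact hv.1⟩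
  have hle : Nat.find hex ≤ m := Nat.find_min' hex (by rw [ww_self]; exact hv.1)
  have hs := Nat.find_spec hex
  have hmin : ∀ j, j < Nat.find hex → v ≤ ww m q j := fun j hj => not_lt.1 (Nat.find_min hex hj)
  generalize Nat.find hex = k at *
  have hp : 0 < q ^ (k + 1) := by positivity
  refine ⟨k, hle, (v - ww m q k) / q ^ (k + 1), ⟨div_pos (by linarith) hp, ?_⟩, ?_⟩
  · rw [div_le_one hp]
    cases k with
    | zero => have := hv.2; simp; linarith
    | succ k =>
      have := hmin k (by omega)
      rw [ww_succ (by omega)] at this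
      linarith
  · rw [mul_div_cancel₀ _ hp.ne']; ring

lemma exp_exists (hq : 0 < q) (hq1 : q < 1) (hW : 1 ≤ ww m q 0 + q) {v : ℝ}
    (hv : v ∈ Set.Ioc (0 : ℝ) 1) :
    ∃ x ∈ Sg m, VV m q x = v ∧ ∀ i, VV m q (shiftN i x) ∈ Set.Ioc (0 : ℝ) 1 := by
  have hstep : ∀ v : Set.Ioc (0 : ℝ) 1, ∃ k, ∃ v' : Set.Ioc (0 : ℝ) 1,
      k ≤ m ∧ (v : ℝ) = ww m q k + q ^ (k + 1) * v' := by
    intro v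
    obtain ⟨k, h1, v', h2, h3⟩ := exp_step (m := m) hq hW v.2
    exact ⟨k, ⟨v', h2⟩, h1, h3⟩
  choose d R hd using hstep
  let x : Set.Ioc (0 : ℝ) 1 → ℕ → ℕ := fun v j => d (R^[j] v)
  have hsh : ∀ v i, shiftN i (x v) = x (R^[i] v) := by
    intro v i; funext j
    simp only [shiftN, x, Function.iterate_add_apply]
  have hVx : ∀ v, VV m q (x v) = v := by
    have hb : ∀ n : ℕ, ∀ v : Set.Ioc (0 : ℝ) 1, |(v : ℝ) - VV m q (x v)| ≤ q ^ n * (1 + m / (1 - q)) := by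
      intro n
      induction n with
      | zero =>
        intro v
        have h1 := VV_le (m := m) hq hq1 (x v)
        have h2 := VV_nonneg (m := m) hq (x v)
        have h3 := v.2.1
        have h4 := v.2.2
        rw [abs_le]; constructor <;> simp <;> linarith
      | succ n ih =>
        intro v
        have h0 : (v : ℝ) - VV m q (x v) = q ^ (d v + 1) * ((R v : ℝ) - VV m q (x (R v))) := by
          rw [VV_rec hq hq1, hsh, (hd v).2]
          simp [x]; ring
        rw [h0, abs_mul, abs_of_nonneg (by positivity)]
        have hle : q ^ (d v + 1) ≤ q := pow_le_of_le_one hq.le hq1.le (by omega)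
        calc _ ≤ q * (q ^ n * (1 + m / (1 - q))) := mul_le_mul hle (ih _) (abs_nonneg _) hq.le
          _ = _ := by ring
    intro v
    have ht : Tendsto (fun n : ℕ => q ^ n * (1 + m / (1 - q))) atTop
        (nhds (0 * (1 + m / (1 - q)))) :=
      (tendsto_pow_atTop_nhds_zero_of_lt_one hq.le hq1).mul_const _
    have := ge_of_tendsto' ht (fun n => hb n v)
    rw [zero_mul] at this
    have := abs_nonpos_iff.1 this
    linarith
  have hmem : ∀ v i, VV m q (shiftN i (x v)) ∈ Set.Ioc (0 : ℝ) 1 := by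
    intro v i; rw [hsh, hVx]; exact (R^[i] v).2
  refine ⟨x ⟨v, hv⟩, ⟨fun i => (hd _).1, fun N => ?_⟩, hVx _, hmem _⟩
  by_contra hc
  push Not at hc
  have h1 := (hmem ⟨v, hv⟩ N).1
  have : VV m q (shiftN N (x ⟨v, hv⟩)) = 0 := by
    unfold VV
    refine (tsum_congr fun j => ?_).trans tsum_zero
    have e : shiftN N (x ⟨v, hv⟩) j = m :=
      le_antisymm (hd _).1 (hc (j + N) (by omega))
    rw [e, ww_self, mul_zero]
  linarith

lemma exp_surj (hq : 0 < q) (hq1 : q < 1) (hW : 1 ≤ ww m q 0 + q) {κ : ℕ → ℕ} (hκ : κ ∈ EE m)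
    (hV : VV m q κ = 1) : Set.Ioc (0 : ℝ) 1 ⊆ VV m q '' Mt m κ := by
  intro v hv
  obtain ⟨x, hx, hxv, hall⟩ := exp_exists hq hq1 hW hv
  refine ⟨x, ⟨hx, fun i hi => ?_⟩, hxv⟩
  obtain ⟨n, h1, h2⟩ := hi
  have := VV_diff hq hq1 h1 h2 (hκ.1.1 n)
  have h3 := (VV_sup hq hq1 hV.le (Mt_shift (EE_self hκ) (n + 1))).trans hV.le
  have h4 := VV_pos hq hq1 (Sg_shift (Sg_shift hx i) (n + 1))
  have h5 : 0 < q ^ (LL (shiftN i x) n) * (q ^ (shiftN i x n + 1) *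
      VV m q (shiftN (n + 1) (shiftN i x)) +
      q ^ (κ n + 1) * (1 - VV m q (shiftN (n + 1) κ))) := by
    have := sub_nonneg.2 h3
    positivity
  have := (hall i).2
  linarith

end V

section dims
open scoped NNReal ENNReal

lemma dim_le {X : Type*} (A B : X → ℝ) (s : Set X) (C r : ℝ) (hC : 0 ≤ C) (hr : 0 < r)
    (h : ∀ x ∈ s, ∀ y ∈ s, |A x - A y| ≤ C * |B x - B y| ^ r) :
    dimH (A '' s) ≤ dimH (B '' s) / ENNReal.ofReal r := by
  rcases s.eq_empty_or_nonempty with rfl | ⟨x0, hx0⟩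
  · simp
  haveI : Nonempty X := ⟨x0⟩
  let f : ℝ → ℝ := fun v => A (Function.invFunOn B s v)
  have hmem : ∀ v ∈ B '' s, Function.invFunOn B s v ∈ s ∧ B (Function.invFunOn B s v) = v :=
    fun v hv => ⟨Function.invFunOn_mem hv, Function.invFunOn_eq hv⟩
  have hf : HolderOnWith C.toNNReal r.toNNReal f (B '' s) := by
    intro v hv w hw
    have := h _ (hmem v hv).1 _ (hmem w hw).1
    rw [(hmem v hv).2, (hmem w hw).2] at this
    rw [edist_dist, edist_dist, Real.dist_eq, Real.dist_eq, Real.coe_toNNReal r hr.le,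
      ENNReal.ofReal_rpow_of_nonneg (abs_nonneg _) hr.le]
    change _ ≤ ENNReal.ofReal C * _
    rw [← ENNReal.ofReal_mul hC]
    exact ENNReal.ofReal_le_ofReal this
  have hi : f '' (B '' s) = A '' s := by
    ext a; constructor
    · rintro ⟨v, hv, rfl⟩; exact ⟨_, (hmem v hv).1, rfl⟩
    · rintro ⟨x, hx, rfl⟩
      refine ⟨B x, ⟨x, hx, rfl⟩, ?_⟩
      have h1 := hmem (B x) ⟨x, hx, rfl⟩
      have := h _ h1.1 _ hx
      rw [h1.2, sub_self, abs_zero, Real.zero_rpow hr.ne', mul_zero] at this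
      have := abs_nonpos_iff.1 this
      change A _ = A x
      linarith
  rw [← hi]
  exact hf.dimH_image_le (by simpa using hr)

variable {m : ℕ} {p q : ℝ}

lemma VV_lower (hp : 0 < p) (hp1 : p < 1) {κ : ℕ → ℕ} (hV : VV m p κ < 1) {x y : ℕ → ℕ}
    (hy : y ∈ Mt m κ) {n : ℕ} (h1 : ∀ i, i < n → x i = y i) (h2 : x n < y n) :
    p ^ (LL x n) * (p ^ (m + 1) * (1 - VV m p κ)) ≤ |VV m p x - VV m p y| := by
  refine le_trans ?_ (le_abs_self _)
  refine le_trans ?_ (VV_diff hp hp1 h1 h2 (hy.1.1 n))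
  refine mul_le_mul_of_nonneg_left ?_ (by positivity)
  have h3 := VV_sup hp hp1 hV.le (Mt_shift hy (n + 1))
  have h4 : 0 ≤ p ^ (x n + 1) * VV m p (shiftN (n + 1) x) :=
    mul_nonneg (by positivity) (VV_nonneg hp _)
  have h5 : p ^ (m + 1) ≤ p ^ (y n + 1) :=
    pow_le_pow_of_le_one hp.le hp1.le (by have := hy.1.1 n; omega)
  have h6 : p ^ (m + 1) * (1 - VV m p κ) ≤ p ^ (y n + 1) * (1 - VV m p (shiftN (n + 1) y)) :=
    mul_le_mul h5 (by linarith) (by linarith) (by positivity)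
  linarith

lemma dim_compare (hp : 0 < p) (hp1 : p < 1) (hq : 0 < q) (hq1 : q < 1) {κ : ℕ → ℕ}
    (hV : VV m p κ < 1) :
    dimH (VV m q '' Mt m κ) ≤ dimH (VV m p '' Mt m κ) / ENNReal.ofReal (Real.log q / Real.log p) := by
  have hlp := Real.log_neg hp hp1
  have hlq := Real.log_neg hq hq1
  set r := Real.log q / Real.log p with hr
  have hr0 : 0 < r := div_pos_of_neg_of_neg hlq hlp
  have hpr : p ^ r = q := by
    rw [Real.rpow_def_of_pos hp, hr, mul_div_cancel₀ _ hlp.ne, Real.exp_log hq]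
  set c := p ^ (m + 1) * (1 - VV m p κ) with hc
  have hc0 : 0 < c := mul_pos (by positivity) (by linarith)
  have hD : 0 ≤ (m : ℝ) / (1 - q) := div_nonneg (by positivity) (by linarith)
  have main : ∀ x ∈ Mt m κ, ∀ y ∈ Mt m κ, seqLt x y →
      |VV m q x - VV m q y| ≤ (m / (1 - q) * (c⁻¹) ^ r) * |VV m p x - VV m p y| ^ r := by
    rintro x hx y hy ⟨n, h1, h2⟩
    have hlow := VV_lower hp hp1 hV hy h1 h2
    have hup := VV_agree_abs (m := m) hq hq1 h1
    have h3 : p ^ (LL x n) ≤ c⁻¹ * |VV m p x - VV m p y| := by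
      rw [inv_mul_eq_div, le_div_iff₀ hc0]; exact hlow
    have h4 : q ^ (LL x n) ≤ (c⁻¹) ^ r * |VV m p x - VV m p y| ^ r := by
      rw [← Real.mul_rpow (by positivity) (abs_nonneg _)]
      calc q ^ (LL x n) = (p ^ (LL x n)) ^ r := by
            rw [← hpr, ← Real.rpow_natCast, ← Real.rpow_natCast, ← Real.rpow_mul hp.le,
              ← Real.rpow_mul hp.le, mul_comm]
        _ ≤ _ := Real.rpow_le_rpow (by positivity) h3 hr0.le
    calc _ ≤ _ := hup
      _ ≤ ((c⁻¹) ^ r * |VV m p x - VV m p y| ^ r) * (m / (1 - q)) :=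
          mul_le_mul_of_nonneg_right h4 hD
      _ = _ := by ring
  refine dim_le _ _ _ (m / (1 - q) * (c⁻¹) ^ r) r (by positivity) hr0 ?_
  intro x hx y hy
  by_cases hxy : x = y
  · subst hxy; simp [Real.zero_rpow hr0.ne']
  rcases lt_tri hxy with h | h
  · exact main x hx y hy h
  · rw [abs_sub_comm, abs_sub_comm (VV m p x)]; exact main y hy x hx h

lemma dimH_real_le (s : Set ℝ) : dimH s ≤ 1 := by
  have := dimH_mono (subset_univ s)
  rwa [Real.dimH_univ] at this

lemma dimH_Ioc : dimH (Set.Ioc (0 : ℝ) 1) = 1 := by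
  rw [Real.dimH_of_nonempty_interior] <;> simp

lemma VV_mono (hp : 0 < p) (hpq : p < q) (hq1 : q < 1) {κ : ℕ → ℕ} (hκ : κ ∈ Sg m) :
    VV m p κ < VV m q κ := by
  have hq : 0 < q := hp.trans hpq
  have hw : ∀ k, ww m p k ≤ ww m q k := fun k =>
    Finset.sum_le_sum fun j _ => pow_le_pow_left₀ hp.le hpq.le _
  obtain ⟨n, _, hn⟩ := hκ.2 0
  have hw' : ww m p (κ n) < ww m q (κ n) := by
    refine Finset.sum_lt_sum_of_nonempty ⟨m, by simp [hn]⟩ fun j _ =>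
      pow_lt_pow_left₀ hpq hp.le (by omega)
  refine Summable.tsum_lt_tsum (i := n) (fun j => ?_) ?_ (VV_summable hp (hpq.trans hq1) κ)
    (VV_summable hq hq1 κ)
  · exact mul_le_mul (pow_le_pow_left₀ hp.le hpq.le _) (hw _) (ww_nonneg hp _) (by positivity)
  · exact mul_lt_mul' (pow_le_pow_left₀ hp.le hpq.le _) hw' (ww_nonneg hp _) (by positivity)

lemma VV_cont {a b : ℝ} (ha : 0 < a) (hb : b < 1) (κ : ℕ → ℕ) :
    ContinuousOn (fun q => VV m q κ) (Set.Icc a b) := by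
  rcases lt_or_ge b a with h | h
  · simp [Set.Icc_eq_empty_of_lt h]
  refine continuousOn_tsum (u := fun j : ℕ => b ^ j * (m : ℝ)) ?_ (summ_geo (ha.trans_le h) hb) ?_
  · intro i
    unfold ww
    fun_prop
  · intro n x hx
    have hx0 : 0 < x := ha.trans_le hx.1
    rw [Real.norm_of_nonneg (term_nonneg hx0 κ n)]
    refine (term_le hx0 (hx.2.trans_lt hb) κ n).trans ?_
    gcongr
    exact hx.2

lemma VV_large {κ : ℕ → ℕ} (hκ : κ ∈ Sg m) (hp1 : p < 1) : ∃ q, p < q ∧ q < 1 ∧ 0 < q ∧ 1 < VV m q κ := by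
  obtain ⟨n1, _, h1⟩ := hκ.2 0
  obtain ⟨n2, h12, h2⟩ := hκ.2 (n1 + 1)
  set A := LL κ n1 + LL κ n2 + (m + 1)
  have hlow : ∀ q : ℝ, 0 < q → q < 1 → 2 * q ^ A ≤ VV m q κ := by
    intro q hq hq1
    have hs := (VV_summable (m := m) hq hq1 κ).sum_le_tsum {n1, n2} (fun i _ => term_nonneg hq κ i)
    rw [Finset.sum_pair (by omega)] at hs
    have hw : ∀ k, k < m → q ^ (m + 1) ≤ ww m q k := fun k hk => by
      have := ww_diff (m := m) hq hk le_rfl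
      rwa [ww_self, sub_zero] at this
    have e1 : q ^ A ≤ q ^ (LL κ n1) * ww m q (κ n1) := by
      calc q ^ A ≤ q ^ (LL κ n1 + (m + 1)) := pow_le_pow_of_le_one hq.le hq1.le (by omega)
        _ = q ^ (LL κ n1) * q ^ (m + 1) := pow_add _ _ _
        _ ≤ _ := mul_le_mul_of_nonneg_left (hw _ h1) (by positivity)
    have e2 : q ^ A ≤ q ^ (LL κ n2) * ww m q (κ n2) := by
      calc q ^ A ≤ q ^ (LL κ n2 + (m + 1)) := pow_le_pow_of_le_one hq.le hq1.le (by omega)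
        _ = q ^ (LL κ n2) * q ^ (m + 1) := pow_add _ _ _
        _ ≤ _ := mul_le_mul_of_nonneg_left (hw _ h2) (by positivity)
    unfold VV
    linarith
  have hc : Tendsto (fun q : ℝ => 2 * q ^ A) (nhdsWithin 1 (Set.Iio 1)) (nhds (2 * 1 ^ A)) :=
    ((by fun_prop : Continuous fun q : ℝ => 2 * q ^ A).tendsto 1).mono_left nhdsWithin_le_nhds
  have ev := hc.eventually (lt_mem_nhds (show (1 : ℝ) < 2 * 1 ^ A by norm_num))
  have ev2 : ∀ᶠ q : ℝ in nhdsWithin 1 (Set.Iio 1), max p 0 < q ∧ q < 1 :=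
    Ioo_mem_nhdsLT (show max p 0 < 1 by simp [hp1])
  obtain ⟨q, h3, h4, h5⟩ := (ev.and ev2).exists
  have h0 : 0 < q := (le_max_right _ _).trans_lt h4
  exact ⟨q, (le_max_left _ _).trans_lt h4, h5, h0, h3.trans_le (hlow q h0 h5)⟩

lemma VV_root (hp : 0 < p) (hp1 : p < 1) {κ : ℕ → ℕ} (hκ : κ ∈ Sg m) (hV : VV m p κ ≤ 1) :
    ∃ ρ, p ≤ ρ ∧ ρ < 1 ∧ VV m ρ κ = 1 := by
  obtain ⟨q, h1, h2, h3, h4⟩ := VV_large hκ hp1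
  obtain ⟨ρ, hρ, h5⟩ := intermediate_value_Icc h1.le (VV_cont (m := m) hp h2 κ) ⟨hV, h4.le⟩
  exact ⟨ρ, hρ.1, hρ.2.trans_lt h2, h5⟩

/-- The exact dimension. -/
lemma dim_upper (hp : 0 < p) (hp1 : p < 1) (hq : 0 < q) (hq1 : q < 1) {κ : ℕ → ℕ}
    (hV : VV m p κ < 1) :
    dimH (VV m q '' Mt m κ) ≤ ENNReal.ofReal (Real.log p / Real.log q) := by
  refine (dim_compare hp hp1 hq hq1 hV).trans ?_
  have hlp := Real.log_neg hp hp1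
  have hlq := Real.log_neg hq hq1
  rw [← inv_div (Real.log q), ENNReal.ofReal_inv_of_pos (div_pos_of_neg_of_neg hlq hlp),
    ENNReal.div_eq_inv_mul]
  exact mul_le_of_le_one_right' (dimH_real_le _)

lemma dim_lower {q ρ : ℝ} (hq : 0 < q) (hqρ : q ≤ ρ) (hρ1 : ρ < 1) (hW : ww m q 0 + q = 1)
    {κ : ℕ → ℕ} (hκ : κ ∈ EE m) (hV : VV m ρ κ = 1) :
    ENNReal.ofReal (Real.log ρ / Real.log q) ≤ dimH (VV m q '' Mt m κ) := by
  have hρ : 0 < ρ := hq.trans_le hqρ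
  have hlq := Real.log_neg hq (hqρ.trans_lt hρ1)
  have hlρ := Real.log_neg hρ hρ1
  have hWρ : 1 ≤ ww m ρ 0 + ρ := by
    rw [← hW]
    exact add_le_add (Finset.sum_le_sum fun j _ => pow_le_pow_left₀ hq.le hqρ _) hqρ
  have h1 : 1 ≤ dimH (VV m ρ '' Mt m κ) := by
    rw [← dimH_Ioc]; exact dimH_mono (exp_surj hρ hρ1 hWρ hκ hV)
  rcases hqρ.eq_or_lt with h | h
  · subst h; rw [div_self hlq.ne]; simpa using h1
  have h2 := dim_compare hq (h.trans hρ1) hρ hρ1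
    ((VV_mono hq h hρ1 hκ.1).trans_eq hV)
  have h3 := h1.trans h2
  rwa [ENNReal.le_div_iff_mul_le, one_mul] at h3
  · left; simpa using div_pos_of_neg_of_neg hlρ hlq
  · left; simp

lemma dim_eq {q ρ : ℝ} (hq : 0 < q) (hqρ : q ≤ ρ) (hρ1 : ρ < 1) (hW : ww m q 0 + q = 1)
    {κ : ℕ → ℕ} (hκ : κ ∈ EE m) (hV : VV m ρ κ = 1) :
    dimH (VV m q '' Mt m κ) = ENNReal.ofReal (Real.log ρ / Real.log q) := by
  refine le_antisymm ?_ (dim_lower hq hqρ hρ1 hW hκ hV)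
  have hρ : 0 < ρ := hq.trans_le hqρ
  have ht : Tendsto (fun p => ENNReal.ofReal (Real.log p / Real.log q)) (nhdsWithin ρ (Set.Iio ρ))
      (nhds (ENNReal.ofReal (Real.log ρ / Real.log q))) := by
    refine ENNReal.tendsto_ofReal ?_
    exact ((Real.continuousAt_log hρ.ne').tendsto.div_const _).mono_left nhdsWithin_le_nhds
  refine ge_of_tendsto ht ?_
  have ev : ∀ᶠ p : ℝ in nhdsWithin ρ (Set.Iio ρ), 0 < p ∧ p < ρ := Ioo_mem_nhdsLT hρ
  filter_upwards [ev] with p hp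
  exact dim_upper hp.1 (hp.2.trans hρ1) hq (hqρ.trans_lt hρ1)
    ((VV_mono hp.1 hp.2 hρ1 hκ.1).trans_eq hV)

end dims

section sym
variable {m : ℕ}

def cz (x : ℕ → ℕ) : ℕ → ℕ := fun j => if j = 0 then 0 else x (j - 1)

lemma cz_zero (x : ℕ → ℕ) : cz x 0 = 0 := rfl
lemma cz_succ (x : ℕ → ℕ) (j : ℕ) : cz x (j + 1) = x j := rfl
lemma shift_cz (x : ℕ → ℕ) : shiftN 1 (cz x) = x := by funext j; simp [shiftN, cz_succ]
lemma cz_shift {a : ℕ → ℕ} (h : a 0 = 0) : cz (shiftN 1 a) = a := by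
  funext j
  cases j with
  | zero => simp [cz_zero, h]
  | succ j => simp [cz_succ, shiftN]

lemma cz_Sg {x : ℕ → ℕ} (hx : x ∈ Sg m) : cz x ∈ Sg m := by
  refine ⟨fun i => ?_, fun N => ?_⟩
  · cases i with
    | zero => simp [cz_zero]
    | succ i => exact hx.1 i
  · obtain ⟨n, h1, h2⟩ := hx.2 N
    exact ⟨n + 1, by omega, h2⟩

lemma cz_lt {x y : ℕ → ℕ} (h : seqLt x y) : seqLt (cz x) (cz y) := by
  obtain ⟨n, h1, h2⟩ := h
  refine ⟨n + 1, fun i hi => ?_, h2⟩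
  cases i with
  | zero => rfl
  | succ i => exact h1 i (by omega)

lemma shift_lt {z a : ℕ → ℕ} (ha : a 0 = 0) (h : seqLt z a) :
    seqLt (shiftN 1 z) (shiftN 1 a) := by
  obtain ⟨n, h1, h2⟩ := h
  cases n with
  | zero => rw [ha] at h2; omega
  | succ n => exact ⟨n, fun i hi => h1 (i + 1) (by omega), h2⟩

def tau (a : ℕ → ℕ) : ℕ → ℕ := if a 0 = 0 then shiftN 1 a else Function.update a 0 (a 0 - 1)

lemma shift_update (a : ℕ → ℕ) (k : ℕ) : shiftN 1 (Function.update a 0 k) = shiftN 1 a := by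
  funext j; simp [shiftN]

lemma tau_Sg {a : ℕ → ℕ} (h : a ∈ Sg m) : tau a ∈ Sg m := by
  unfold tau
  split_ifs with h0
  · exact Sg_shift h 1
  · refine ⟨fun i => ?_, fun N => ?_⟩
    · cases i with
      | zero => have := h.1 0; simp; omega
      | succ i => simpa using h.1 (i + 1)
    · obtain ⟨n, h1, h2⟩ := h.2 (N + 1)
      exact ⟨n, by omega, by rw [Function.update_of_ne (by omega)]; exact h2⟩

lemma tau_reach : ∀ k : ℕ, ∀ κ : ℕ → ℕ, κ 0 = k →
    tau^[k] κ = cz (shiftN 1 κ) ∧ tau^[k + 1] κ = shiftN 1 κ := by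
  intro k
  induction k with
  | zero =>
    intro κ h
    refine ⟨(cz_shift h).symm, ?_⟩
    simp [tau, h]
  | succ k ih =>
    intro κ h
    have e : tau κ = Function.update κ 0 k := by simp [tau, h]
    have := ih (tau κ) (by simp [e])
    rw [← Function.iterate_succ_apply, ← Function.iterate_succ_apply] at this
    rw [this.1, this.2, e, shift_update]
    exact ⟨rfl, rfl⟩

lemma surv_iff {a κ : ℕ → ℕ} (ha : a 0 = 0) (hκ : κ ∈ Sg m) :
    (∀ n, ¬ seqLt (tau^[n] κ) a) ↔ shiftN 1 κ ∈ Mt m (shiftN 1 a) := by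
  constructor
  · intro h
    have step : ∀ κ : ℕ → ℕ, (∀ n, ¬ seqLt (tau^[n] κ) a) →
        (∀ n, ¬ seqLt (tau^[n] (shiftN 1 κ)) a) ∧ ¬ seqLt (shiftN 1 κ) (shiftN 1 a) := by
      intro κ h
      have hr := tau_reach _ κ rfl
      constructor
      · intro n
        rw [← hr.2, ← Function.iterate_add_apply]; exact h _
      · intro hlt
        refine h (κ 0) ?_
        rw [hr.1, ← cz_shift ha]
        exact cz_lt hlt
    have all : ∀ i, ∀ n, ¬ seqLt (tau^[n] (shiftN i κ)) a := by
      intro i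
      induction i with
      | zero => rw [shift_zero]; exact h
      | succ i ih =>
        have := (step _ ih).1
        rwa [shift_shift, add_comm 1 i] at this
    refine ⟨Sg_shift hκ 1, fun i => ?_⟩
    have := (step _ (all i)).2
    rwa [shift_shift, add_comm] at this
  · intro h
    have hP : ∀ n, shiftN 1 (tau^[n] κ) ∈ Mt m (shiftN 1 a) := by
      intro n
      induction n with
      | zero => exact h
      | succ n ih =>
        rw [Function.iterate_succ_apply']
        generalize tau^[n] κ = z at ih ⊢
        unfold tau
        split_ifs with h0
        · exact Mt_shift ih 1
        · rw [shift_update]; exact ih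
    intro n hlt
    have := (hP n).2 0
    rw [shift_zero] at this
    exact this (shift_lt ha hlt)

lemma surv_none {a : ℕ → ℕ} (ha : a 0 ≠ 0) (κ : ℕ → ℕ) :
    ∃ n, seqLt (tau^[n] κ) a := by
  refine ⟨κ 0, 0, fun i hi => by omega, ?_⟩
  rw [(tau_reach _ κ rfl).1, cz_zero]; omega

lemma nlt_of_lt {x y : ℕ → ℕ} (h : seqLt x y) : ¬ seqLt y x := fun h' => lt_irr _ (lt_tr h h')

lemma bump_lt {κ x : ℕ → ℕ} (hκ : κ ∈ EE m) {N : ℕ} (hx : ∀ j, j < N → x j = κ j)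
    (hN : x N = κ N + 1) {r : ℕ} (h1 : 1 ≤ r) (h2 : r ≤ N) : seqLt x (shiftN r x) := by
  have key : (∀ j, j < N - r → κ j = κ (j + r)) → κ (N - r) ≤ κ N → seqLt x (shiftN r x) := by
    intro ha hb
    refine ⟨N - r, fun i hi => ?_, ?_⟩
    · rw [hx i (by omega), ha i hi]; exact (hx _ (by omega)).symm
    · change x (N - r) < x (N - r + r)
      rw [Nat.sub_add_cancel h2, hN, hx _ (by omega)]; omega
  by_cases he : κ = shiftN r κ
  · have he' : ∀ j, κ j = κ (j + r) := fun j => congrFun he j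
    exact key (fun j _ => he' j) (by rw [he' (N - r), Nat.sub_add_cancel h2])
  rcases lt_tri he with ⟨p, ha, hb⟩ | h
  · simp only [shiftN] at ha hb
    rcases lt_trichotomy p (N - r) with hp | hp | hp
    · refine ⟨p, fun i hi => ?_, ?_⟩
      · rw [hx i (by omega), ha i hi]; exact (hx _ (by omega)).symm
      · change x p < x (p + r)
        rw [hx p (by omega), hx (p + r) (by omega)]; exact hb
    · refine key (fun j hj => ha j (by omega)) ?_
      rw [hp, Nat.sub_add_cancel h2] at hb; exact hb.le
    · refine key (fun j hj => ha j (by omega)) ?_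
      rw [ha _ hp, Nat.sub_add_cancel h2]
  · exact absurd h (hκ.2 r)

lemma EE_zero_lt {κ : ℕ → ℕ} (hκ : κ ∈ EE m) : κ 0 < m := by
  obtain ⟨n, _, h⟩ := hκ.1.2 0
  by_contra hc
  refine hκ.2 n ⟨0, fun i hi => by omega, ?_⟩
  simp [shiftN]; omega

lemma exists_per {κ : ℕ → ℕ} (hκ : κ ∈ EE m) (n : ℕ) :
    ∃ e ∈ EE m, seqLt κ e ∧ ∀ i, i < n → κ i = e i := by
  obtain ⟨N, h1, h2⟩ := hκ.1.2 (n + 1)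
  let e : ℕ → ℕ := fun j => if j % (N + 1) = N then κ N + 1 else κ (j % (N + 1))
  have he : ∀ j, j < N → e j = κ j := by
    intro j hj
    simp only [e]
    rw [Nat.mod_eq_of_lt (by omega), if_neg (by omega)]
  have heN : e N = κ N + 1 := by simp [e]
  have hmod : ∀ i, shiftN i e = shiftN (i % (N + 1)) e := by
    intro i; funext j; simp [shiftN, e, Nat.add_mod]
  refine ⟨e, ⟨⟨fun i => ?_, fun M => ?_⟩, fun i => ?_⟩, ⟨N, fun i hi => (he i hi).symm, by omega⟩,
    fun i hi => (he i (by omega)).symm⟩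
  · simp only [e]; split_ifs
    · omega
    · exact hκ.1.1 _
  · refine ⟨M * (N + 1), Nat.le_mul_of_pos_right _ (by omega), ?_⟩
    have : e (M * (N + 1)) = κ 0 := by
      simp only [e]
      rw [Nat.mul_mod_left, if_neg (by omega)]
    rw [this]; exact EE_zero_lt hκ
  · rw [hmod]
    have hlt : i % (N + 1) < N + 1 := Nat.mod_lt _ (by omega)
    rcases Nat.eq_zero_or_pos (i % (N + 1)) with h | h
    · rw [h, shift_zero]; exact lt_irr _
    · exact nlt_of_lt (bump_lt hκ he heN h (by omega))

def ct (κ : ℕ → ℕ) (N : ℕ) (y : ℕ → ℕ) : ℕ → ℕ :=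
  fun j => if j < N then κ j else if j = N then κ N + 1 else y (j - (N + 1))

lemma ct_lt (κ y : ℕ → ℕ) {N j : ℕ} (h : j < N) : ct κ N y j = κ j := by simp [ct, h]
lemma ct_N (κ y : ℕ → ℕ) (N : ℕ) : ct κ N y N = κ N + 1 := by simp [ct]
lemma ct_shift (κ y : ℕ → ℕ) (N i : ℕ) : shiftN (i + (N + 1)) (ct κ N y) = shiftN i y := by
  funext j
  simp only [shiftN, ct]
  rw [if_neg (by omega), if_neg (by omega)]
  congr 1; omega

lemma ct_EE {κ b y : ℕ → ℕ} (hκ : κ ∈ EE m) {n N : ℕ} (h1 : ∀ i, i < n → κ i = b i) (h2 : κ n < b n)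
    (hN : n < N) (hm : κ N < m) (hy : y ∈ Mt m b) : ct κ N y ∈ EE m := by
  have hb : seqLt (ct κ N y) b :=
    ⟨n, fun i hi => by rw [ct_lt κ y (by omega)]; exact h1 i hi, by rw [ct_lt κ y hN]; exact h2⟩
  refine ⟨⟨fun i => ?_, fun M => ?_⟩, fun i => ?_⟩
  · simp only [ct]; split_ifs
    · exact hκ.1.1 _
    · omega
    · exact hy.1.1 _
  · obtain ⟨k, h3, h4⟩ := hy.1.2 M
    refine ⟨k + (N + 1), by omega, ?_⟩
    have := congrFun (ct_shift κ y N 0) k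
    simp only [shiftN, zero_add, add_zero] at this
    rw [this]; exact h4
  · rcases Nat.eq_zero_or_pos i with h | h
    · rw [h, shift_zero]; exact lt_irr _
    rcases le_or_gt i N with h' | h'
    · exact nlt_of_lt (bump_lt hκ (fun j hj => ct_lt κ y hj) (ct_N κ y N) h h')
    · obtain ⟨k, rfl⟩ := Nat.exists_eq_add_of_lt h'
      rw [show N + k + 1 = k + (N + 1) by ring, ct_shift]
      exact fun hh => hy.2 k (lt_tr hh hb)

lemma not_EE_bump {b : ℕ → ℕ} (hb : b ∈ Sg m) (hn : b ∉ EE m) :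
    ∃ b' ∈ Sg m, seqLt b b' ∧ Mt m b' = Mt m b := by
  have : ∃ i, seqLt (shiftN i b) b := by
    by_contra hc; push Not at hc; exact hn ⟨hb, hc⟩
  obtain ⟨i, n, h1, h2⟩ := this
  obtain ⟨N, hN, hbN⟩ := hb.2 (i + n + 1)
  have hag : ∀ j, j < N → Function.update b N (b N + 1) j = b j := fun j hj =>
    Function.update_of_ne (by omega) _ _
  have hlt : seqLt b (Function.update b N (b N + 1)) :=
    ⟨N, fun j hj => (hag j hj).symm, by simp⟩
  refine ⟨Function.update b N (b N + 1), ⟨fun j => ?_, fun M => ?_⟩, hlt, ?_⟩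
  · by_cases hj : j = N
    · subst hj; simp; omega
    · rw [Function.update_of_ne hj]; exact hb.1 j
  · obtain ⟨k, h3, h4⟩ := hb.2 (M + N + 1)
    exact ⟨k, by omega, by rw [Function.update_of_ne (by omega)]; exact h4⟩
  · refine Set.Subset.antisymm (Mt_anti (nlt_of_lt hlt)) fun x hx => ⟨hx.1, fun j hj => ?_⟩
    obtain ⟨p, h3, h4⟩ := hj
    have hz := hx.2 j
    have hp : N ≤ p := by
      by_contra hp
      push Not at hp
      refine hz ⟨p, fun l hl => ?_, ?_⟩
      · rw [h3 l hl, hag l (by omega)]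
      · rw [hag p hp] at h4; exact h4
    have hzb : ∀ l, l < N → shiftN j x l = b l := fun l hl => by
      rw [h3 l (by omega), hag l hl]
    refine hx.2 (i + j) ⟨n, fun l hl => ?_, ?_⟩
    · rw [← h1 l hl, ← shift_shift]
      exact hzb (l + i) (by omega)
    · rw [← shift_shift]
      have : shiftN i (shiftN j x) n = shiftN i b n := hzb (n + i) (by omega)
      rw [this]; exact h2

end sym


section real

structure Hy (m : ℕ) (q β : ℝ) : Prop where
  hm : 1 ≤ m
  hq : 0 < q
  hq1 : q < 1
  hβ : β * q = 1
  hW : ww m q 0 + q = 1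

variable {m : ℕ} {q β : ℝ}

lemma Hy_of (hβ : β ∈ Set.Ioo (1 : ℝ) 2) (hmul : IsMultinacci β) : ∃ m, Hy m β⁻¹ β := by
  obtain ⟨m, hm, h⟩ := hmul
  have h0 : 0 < β := by linarith [hβ.1]
  have hq : β * β⁻¹ = 1 := mul_inv_cancel₀ h0.ne'
  refine ⟨m, hm, inv_pos.2 h0, inv_lt_one_of_one_lt₀ hβ.1, hq, ?_⟩
  have h1 : ww m β⁻¹ 0 + β⁻¹ = ∑ j ∈ Finset.range (m + 1), β⁻¹ ^ (j + 1) := by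
    unfold ww
    clear h hm
    induction m with
    | zero => simp
    | succ n ih => rw [Finset.sum_Ioc_succ_top (by omega), Finset.sum_range_succ, ← ih]; ring
  rw [h1]
  have h2 : β ^ (m + 1) * ∑ j ∈ Finset.range (m + 1), β⁻¹ ^ (j + 1) = β ^ (m + 1) := by
    rw [← Finset.sum_range_reflect, Finset.mul_sum]
    conv_rhs => rw [h]
    refine Finset.sum_congr rfl fun j hj => ?_
    have hj' : j < m + 1 := Finset.mem_range.1 hj
    have e1 : m + 1 - 1 - j + 1 = m + 1 - j := by omega
    rw [e1]
    have e2 : β ^ (m + 1) = β ^ j * β ^ (m + 1 - j) := by rw [← pow_add]; congr 1; omega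
    rw [e2, mul_assoc, ← mul_pow, hq, one_pow, mul_one]
  have h3 : β ^ (m + 1) ≠ 0 := (pow_pos h0 _).ne'
  exact mul_left_cancel₀ h3 (by rw [h2, mul_one])

lemma qww (k : ℕ) (hk : k < m) : q * ww m q k = ww m q (k + 1) + q ^ (m + 2) := by
  induction m, hk using Nat.le_induction with
  | base => simp only [Nat.succ_eq_add_one]; rw [ww_self, ww_succ (Nat.lt_succ_self k), ww_self]; ring
  | succ n hn ih =>
    have e1 : ww (n + 1) q k = ww n q k + q ^ (n + 2) := by
      unfold ww; rw [Finset.sum_Ioc_succ_top (by omega)]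
    have e2 : ww (n + 1) q (k + 1) = ww n q (k + 1) + q ^ (n + 2) := by
      unfold ww; rw [Finset.sum_Ioc_succ_top (by omega)]
    rw [e1, e2, mul_add, ih]; ring

lemma Hy.two (H : Hy m q β) : 2 * q - 1 = q ^ (m + 2) := by
  have h1 := qww (q := q) 0 (show 0 < m by have := H.hm; omega)
  have h2 := ww_succ (q := q) (show 0 < m by have := H.hm; omega)
  have h3 := H.hW
  simp only [zero_add] at h1 h2
  have : ww m q 0 = 1 - q := by linarith
  rw [this] at h1 h2
  nlinarith

lemma Hy.le_one (H : Hy m q β) {a : ℕ → ℕ} (ha : a ∈ Sg m) : VV m q a ≤ 1 := by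
  have h0 : VV m q (fun _ => 0) = 1 := by
    have := VV_rec (m := m) H.hq H.hq1 (fun _ => 0)
    have e : shiftN 1 (fun _ : ℕ => (0 : ℕ)) = fun _ => 0 := rfl
    rw [e] at this
    simp only [zero_add, pow_one] at this
    have hW := H.hW
    have hq1 := H.hq1
    have : (1 - q) * (VV m q (fun _ => 0) - 1) = 0 := by linear_combination this + hW
    rcases mul_eq_zero.1 this with h | h <;> linarith
  rw [← h0]
  refine VV_sup H.hq H.hq1 h0.le ⟨ha, fun i => ?_⟩
  rintro ⟨n, _, h⟩
  exact absurd h (Nat.not_lt_zero _)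

noncomputable def XX (m : ℕ) (q : ℝ) (a : ℕ → ℕ) : ℝ := 1 - VV m q a

lemma Hy.XX_mem (H : Hy m q β) {a : ℕ → ℕ} (ha : a ∈ Sg m) : XX m q a ∈ Set.Ico (0 : ℝ) 1 := by
  have h1 := H.le_one ha
  have h2 := VV_pos H.hq H.hq1 ha
  unfold XX
  constructor <;> linarith

lemma Hy.XX_lt (H : Hy m q β) {a b : ℕ → ℕ} (ha : a ∈ Sg m) (hb : b ∈ Sg m) (h : seqLt a b) :
    XX m q a < XX m q b := by
  obtain ⟨n, h1, h2⟩ := h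
  have h3 := VV_diff (m := m) H.hq H.hq1 h1 h2 (hb.1 n)
  have h4 := VV_pos H.hq H.hq1 (Sg_shift ha (n + 1))
  have h5 := H.le_one (Sg_shift hb (n + 1))
  have hq := H.hq
  have : 0 < q ^ (LL a n) * (q ^ (a n + 1) * VV m q (shiftN (n + 1) a) +
      q ^ (b n + 1) * (1 - VV m q (shiftN (n + 1) b))) := by
    have : 0 ≤ q ^ (b n + 1) * (1 - VV m q (shiftN (n + 1) b)) :=
      mul_nonneg (by positivity) (by linarith)
    positivity
  unfold XX
  linarith

lemma Hy.XX_le (H : Hy m q β) {a b : ℕ → ℕ} (ha : a ∈ Sg m) (hb : b ∈ Sg m) :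
    XX m q a ≤ XX m q b ↔ ¬ seqLt b a := by
  constructor
  · intro h h'
    exact absurd (H.XX_lt hb ha h') (not_lt.2 h)
  · intro h
    by_cases e : a = b
    · rw [e]
    · rcases lt_tri e with h' | h'
      · exact (H.XX_lt ha hb h').le
      · exact absurd h' h

lemma Hy.lt_of_XX (H : Hy m q β) {a b : ℕ → ℕ} (ha : a ∈ Sg m) (hb : b ∈ Sg m)
    (h : XX m q a < XX m q b) : seqLt a b := by
  by_contra hc
  exact absurd ((H.XX_le hb ha).2 hc) (not_le.2 h)

lemma Hy.XX_surj (H : Hy m q β) {t : ℝ} (ht : t ∈ Set.Ico (0 : ℝ) 1) : ∃ a ∈ Sg m, XX m q a = t := by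
  obtain ⟨x, hx, h, _⟩ := exp_exists (v := 1 - t) H.hq H.hq1 H.hW.ge
    ⟨by linarith [ht.2], by linarith [ht.1]⟩
  exact ⟨x, hx, by unfold XX; rw [h]; ring⟩

lemma Hy.T_step (H : Hy m q β) {a : ℕ → ℕ} (ha : a ∈ Sg m) :
    Tbeta β (XX m q a) = XX m q (tau a) := by
  unfold Tbeta
  have hm := H.XX_mem (tau_Sg ha)
  rw [Int.fract_eq_iff]
  refine ⟨hm.1, hm.2, ?_⟩
  have hr := VV_rec (m := m) H.hq H.hq1 a
  have hβ := H.hβ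
  have hW := H.hW
  by_cases h0 : a 0 = 0
  · refine ⟨0, ?_⟩
    rw [h0] at hr
    simp only [zero_add, pow_one] at hr
    have e : tau a = shiftN 1 a := by simp [tau, h0]
    unfold XX
    rw [e, hr]
    push_cast
    linear_combination (-β) * hW + (1 - VV m q (shiftN 1 a)) * hβ
  · refine ⟨1, ?_⟩
    obtain ⟨k, hk⟩ := Nat.exists_eq_succ_of_ne_zero h0
    have hkm : k < m := by have := ha.1 0; omega
    have e : tau a = Function.update a 0 k := by
      unfold tau; rw [if_neg h0, hk]; rfl
    have hr2 := VV_rec (m := m) H.hq H.hq1 (Function.update a 0 k)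
    rw [shift_update, Function.update_self] at hr2
    rw [hk] at hr
    unfold XX
    rw [e, hr, hr2]
    have f1 := qww (q := q) k hkm
    have f2 := H.two
    simp only [Nat.succ_eq_add_one]
    push_cast
    linear_combination β*f1 - β*f2 + (2 - ww m q k - q^(k+1)*VV m q (shiftN 1 a))*hβ

lemma tau_iter_Sg {a : ℕ → ℕ} (ha : a ∈ Sg m) (n : ℕ) : tau^[n] a ∈ Sg m := by
  induction n with
  | zero => exact ha
  | succ n ih => rw [Function.iterate_succ_apply']; exact tau_Sg ih

lemma Hy.T_iter (H : Hy m q β) {a : ℕ → ℕ} (ha : a ∈ Sg m) (n : ℕ) :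
    (Tbeta β)^[n] (XX m q a) = XX m q (tau^[n] a) := by
  induction n with
  | zero => rfl
  | succ n ih =>
    rw [Function.iterate_succ_apply', ih, H.T_step (tau_iter_Sg ha n), Function.iterate_succ_apply']

lemma Hy.mem_K (H : Hy m q β) {a κ : ℕ → ℕ} (ha : a ∈ Sg m) (hκ : κ ∈ Sg m) :
    XX m q κ ∈ Kset β (XX m q a) ↔ ∀ n, ¬ seqLt (tau^[n] κ) a := by
  constructor
  · intro h n
    have := h.2 n
    rw [H.T_iter hκ, H.XX_le ha (tau_iter_Sg hκ n)] at this
    exact this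
  · intro h
    refine ⟨H.XX_mem hκ, fun n => ?_⟩
    rw [H.T_iter hκ, H.XX_le ha (tau_iter_Sg hκ n)]
    exact h n

lemma Hy.K_empty (H : Hy m q β) {a : ℕ → ℕ} (ha : a ∈ Sg m) (h0 : a 0 ≠ 0) :
    Kset β (XX m q a) = ∅ := by
  ext x
  simp only [Set.mem_empty_iff_false, iff_false]
  intro hx
  obtain ⟨κ, hκ, rfl⟩ := H.XX_surj hx.1
  rw [H.mem_K ha hκ] at hx
  obtain ⟨n, hn⟩ := surv_none h0 κ
  exact hx n hn

lemma Hy.K_eq (H : Hy m q β) {a : ℕ → ℕ} (ha : a ∈ Sg m) (h0 : a 0 = 0) :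
    Kset β (XX m q a) = XX m q '' {κ | κ ∈ Sg m ∧ shiftN 1 κ ∈ Mt m (shiftN 1 a)} := by
  ext x
  constructor
  · intro hx
    obtain ⟨κ, hκ, rfl⟩ := H.XX_surj hx.1
    rw [H.mem_K ha hκ, surv_iff h0 hκ] at hx
    exact ⟨κ, ⟨hκ, hx⟩, rfl⟩
  · rintro ⟨κ, ⟨hκ, hx⟩, rfl⟩
    rw [H.mem_K ha hκ, surv_iff h0 hκ]
    exact hx

lemma Hy.dim_XX (s : Set (ℕ → ℕ)) : dimH (XX m q '' s) = dimH (VV m q '' s) := by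
  apply le_antisymm
  · have := dim_le (XX m q) (VV m q) s 1 1 (by norm_num) (by norm_num) (fun x _ y _ => by
      unfold XX; rw [Real.rpow_one, one_mul, abs_sub_comm]; apply le_of_eq; congr 1; ring)
    simpa using this
  · have := dim_le (VV m q) (XX m q) s 1 1 (by norm_num) (by norm_num) (fun x _ y _ => by
      unfold XX; rw [Real.rpow_one, one_mul, abs_sub_comm]; apply le_of_eq; congr 1; ring)
    simpa using this

lemma Hy.dim_K (H : Hy m q β) {a : ℕ → ℕ} (ha : a ∈ Sg m) (h0 : a 0 = 0) :
    dimH (Kset β (XX m q a)) = dimH (VV m q '' Mt m (shiftN 1 a)) := by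
  rw [H.K_eq ha h0, Hy.dim_XX]
  set b := shiftN 1 a
  apply le_antisymm
  · have : VV m q '' {κ | κ ∈ Sg m ∧ shiftN 1 κ ∈ Mt m b} ⊆
        ⋃ k : ℕ, VV m q '' {κ | κ 0 = k ∧ shiftN 1 κ ∈ Mt m b} := by
      rintro _ ⟨κ, hκ, rfl⟩
      exact Set.mem_iUnion.2 ⟨κ 0, κ, ⟨rfl, hκ.2⟩, rfl⟩
    refine (dimH_mono this).trans ?_
    rw [dimH_iUnion]
    refine iSup_le fun k => ?_
    have h1 := dim_le (VV m q) (fun x => VV m q (shiftN 1 x)) {κ | κ 0 = k ∧ shiftN 1 κ ∈ Mt m b}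
      (q ^ (k + 1)) 1 (pow_nonneg H.hq.le _) (by norm_num) (fun x hx y hy => by
        rw [Real.rpow_one, VV_rec H.hq H.hq1 x, VV_rec H.hq H.hq1 y, hx.1, hy.1,
          add_sub_add_left_eq_sub, ← mul_sub, abs_mul, abs_of_nonneg (pow_nonneg H.hq.le _)])
    simp only [ENNReal.ofReal_one, div_one] at h1
    refine h1.trans (dimH_mono ?_)
    rintro _ ⟨κ, hκ, rfl⟩
    exact ⟨_, hκ.2, rfl⟩
  · refine dimH_mono (Set.image_mono ?_)
    intro κ hκ
    exact ⟨hκ.1, Mt_shift hκ 1⟩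

lemma K_anti {s t : ℝ} (h : s ≤ t) : Kset β t ⊆ Kset β s :=
  fun _ hx => ⟨hx.1, fun n => h.trans (hx.2 n)⟩

lemma Hy.root (H : Hy m q β) {κ : ℕ → ℕ} (hκ : κ ∈ Sg m) : ∃ ρ, q ≤ ρ ∧ ρ < 1 ∧ VV m ρ κ = 1 :=
  VV_root H.hq H.hq1 hκ (H.le_one hκ)

lemma Hy.strict (H : Hy m q β) {κ e : ℕ → ℕ} (hκ : κ ∈ EE m) (he : e ∈ EE m) (h : seqLt κ e) :
    dimH (VV m q '' Mt m e) < dimH (VV m q '' Mt m κ) := by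
  obtain ⟨ρ, h1, h2, h3⟩ := H.root hκ.1
  obtain ⟨σ, g1, g2, g3⟩ := H.root he.1
  rw [dim_eq H.hq h1 h2 H.hW hκ h3, dim_eq H.hq g1 g2 H.hW he g3]
  have hρ0 : 0 < ρ := H.hq.trans_le h1
  have hσ0 : 0 < σ := H.hq.trans_le g1
  have k1 := VV_strict hρ0 h2 hκ.1 h3.le (EE_mem_Mt he (nlt_of_lt h)) h
  have k2 : ρ < σ := by
    by_contra hc
    rcases (not_lt.1 hc).eq_or_lt with e1 | e1
    · rw [e1] at g3; linarith
    · have := VV_mono hσ0 e1 h2 he.1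
      linarith
  have hl := Real.log_neg H.hq H.hq1
  rw [ENNReal.ofReal_lt_ofReal_iff (div_pos_of_neg_of_neg (Real.log_neg hρ0 h2) hl)]
  exact div_lt_div_of_neg_of_lt hl (Real.log_lt_log hρ0 k2)

end real


section fin

variable {m : ℕ} {q β : ℝ}

lemma Hy.dim_pos (H : Hy m q β) {κ : ℕ → ℕ} (hκ : κ ∈ EE m) : 0 < dimH (VV m q '' Mt m κ) := by
  obtain ⟨e, he, h, _⟩ := exists_per hκ 0
  exact zero_le.trans_lt (H.strict hκ he h)

lemma Hy.mem_B (H : Hy m q β) {a : ℕ → ℕ} (ha : a ∈ Sg m) :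
    XX m q a ∈ Bset β ↔ a 0 = 0 ∧ shiftN 1 a ∈ EE m := by
  constructor
  · intro h
    have h0 : a 0 = 0 := by
      by_contra h0
      have hm := H.XX_mem ha
      refine h.2 ((XX m q a + 1) / 2) (by linarith [hm.2]) (by linarith [hm.2]) ?_
      have := K_anti (β := β) (show XX m q a ≤ (XX m q a + 1) / 2 by linarith [hm.2])
      rw [H.K_empty ha h0] at this ⊢
      rw [Set.subset_empty_iff.1 this]
    refine ⟨h0, ?_⟩
    by_contra hn
    obtain ⟨b, hb, hlt, hM⟩ := not_EE_bump (Sg_shift ha 1) hn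
    have hl : seqLt a (cz b) := by
      have := cz_lt hlt
      rwa [cz_shift h0] at this
    refine h.2 (XX m q (cz b)) (H.XX_lt ha (cz_Sg hb) hl) (H.XX_mem (cz_Sg hb)).2 ?_
    rw [H.dim_K (cz_Sg hb) (cz_zero b), H.dim_K ha h0, shift_cz, hM]
  · rintro ⟨h0, hκ⟩
    refine ⟨H.XX_mem ha, fun t' ht ht1 => ?_⟩
    obtain ⟨a', ha', rfl⟩ := H.XX_surj ⟨(H.XX_mem ha).1.trans ht.le, ht1⟩
    have hlt := H.lt_of_XX ha ha' ht
    rw [H.dim_K ha h0]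
    apply ne_of_lt
    by_cases h0' : a' 0 = 0
    · rw [H.dim_K ha' h0']
      obtain ⟨n, h1, h2⟩ := shift_lt h0' hlt
      obtain ⟨e, he, hke, hag⟩ := exists_per hκ (n + 1)
      have hlt2 : seqLt e (shiftN 1 a') :=
        ⟨n, fun i hi => (hag i (by omega)).symm.trans (h1 i hi), by rw [← hag n (by omega)]; exact h2⟩
      exact (dimH_mono (Set.image_mono (Mt_anti (nlt_of_lt hlt2)))).trans_lt (H.strict hκ he hke)
    · rw [H.K_empty ha' h0', dimH_empty]
      exact H.dim_pos hκ

lemma Hy.B_sub (H : Hy m q β) (t r : ℝ) : Bset β ∩ Set.Ioo t (t + r) ⊆ Kset β t := by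
  rintro s ⟨hs, hs1, _⟩
  obtain ⟨a, ha, rfl⟩ := H.XX_surj hs.1
  have h := (H.mem_B ha).1 hs
  refine K_anti hs1.le ?_
  rw [H.mem_K ha ha, surv_iff h.1 ha]
  exact EE_self h.2

lemma Hy.embed (H : Hy m q β) {κ e : ℕ → ℕ} (hκ : κ ∈ EE m) (hlt : seqLt κ e)
    {r : ℝ} (hr : 0 < r) : dimH (VV m q '' Mt m e) ≤
      dimH (Bset β ∩ Set.Ioo (XX m q (cz κ)) (XX m q (cz κ) + r)) := by
  obtain ⟨n, h1, h2⟩ := hlt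
  have hq := H.hq
  have hq1 := H.hq1
  have hlim : Tendsto (fun N : ℕ => q ^ N * ((m : ℝ) / (1 - q))) atTop (nhds 0) := by
    have := (tendsto_pow_atTop_nhds_zero_of_lt_one hq.le hq1).mul_const ((m : ℝ) / (1 - q))
    simpa using this
  obtain ⟨N0, hN0⟩ := eventually_atTop.1 (hlim.eventually (gt_mem_nhds hr))
  obtain ⟨N, hN, hNm⟩ := hκ.1.2 (max N0 (n + 1))
  have hNn : n < N := by omega
  have hNr := hN0 N (by omega)
  have hc : ∀ y ∈ Mt m e, ct κ N y ∈ EE m := fun y hy => ct_EE hκ h1 h2 hNn hNm hy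
  have himg : (fun y => XX m q (cz (ct κ N y))) '' Mt m e ⊆
      Bset β ∩ Set.Ioo (XX m q (cz κ)) (XX m q (cz κ) + r) := by
    rintro _ ⟨y, hy, rfl⟩
    have hy' := hc y hy
    have hSg := cz_Sg hy'.1
    refine ⟨(H.mem_B hSg).2 ⟨cz_zero _, by rw [shift_cz]; exact hy'⟩, ?_, ?_⟩
    · refine H.XX_lt (cz_Sg hκ.1) hSg (cz_lt ⟨N, fun i hi => (ct_lt κ y hi).symm, ?_⟩)
      rw [ct_N]; omega
    · have hag : ∀ i, i < N → cz κ i = cz (ct κ N y) i := by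
        intro i hi
        cases i with
        | zero => rfl
        | succ i => rw [cz_succ, cz_succ, ct_lt κ y (by omega)]
      have h3 := VV_agree_abs (m := m) hq hq1 hag
      have h4 : q ^ (LL (cz κ) N) ≤ q ^ N := pow_le_pow_of_le_one hq.le hq1.le (le_LL _ _)
      have h5 : (0 : ℝ) ≤ (m : ℝ) / (1 - q) := div_nonneg (Nat.cast_nonneg m) (by linarith)
      have h6 := mul_le_mul_of_nonneg_right h4 h5
      have h7 := le_abs_self (VV m q (cz κ) - VV m q (cz (ct κ N y)))
      simp only [XX]
      linarith
  refine le_trans ?_ (dimH_mono himg)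
  set L := LL (cz (ct κ N (fun _ => 0))) (N + 2) with hL
  have hagr : ∀ x y : ℕ → ℕ, ∀ i, i < N + 2 → cz (ct κ N x) i = cz (ct κ N y) i := by
    intro x y i hi
    cases i with
    | zero => rfl
    | succ i =>
      rw [cz_succ, cz_succ]
      by_cases hiN : i < N
      · rw [ct_lt κ x hiN, ct_lt κ y hiN]
      · have : i = N := by omega
        subst this
        rw [ct_N, ct_N]
  have hsh : ∀ x : ℕ → ℕ, shiftN (N + 2) (cz (ct κ N x)) = x := by
    intro x
    have := ct_shift κ x N 0
    rw [shift_zero, zero_add, ← shift_cz (ct κ N x), shift_shift] at this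
    exact this
  have key : ∀ x y : ℕ → ℕ, XX m q (cz (ct κ N x)) - XX m q (cz (ct κ N y)) =
      q ^ L * (VV m q y - VV m q x) := by
    intro x y
    have := VV_agree (m := m) hq hq1 (N + 2) _ _ (hagr y x)
    rw [hsh, hsh, LL_congr (hagr y (fun _ => 0)), ← hL] at this
    simp only [XX]
    linarith
  have hqL : 0 < q ^ L := pow_pos hq _
  have := dim_le (VV m q) (fun y => XX m q (cz (ct κ N y))) (Mt m e) (q ^ L)⁻¹ 1
    (inv_nonneg.2 hqL.le) (by norm_num) (fun x _ y _ => by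
      simp only [key, Real.rpow_one]
      rw [abs_mul, abs_of_pos hqL, inv_mul_cancel_left₀ hqL.ne', abs_sub_comm])
  simpa using this

lemma Hy.lower (H : Hy m q β) {κ : ℕ → ℕ} (hκ : κ ∈ EE m) {D : ENNReal}
    (hD : ∀ e ∈ EE m, seqLt κ e → dimH (VV m q '' Mt m e) ≤ D) :
    dimH (VV m q '' Mt m κ) ≤ D := by
  obtain ⟨ρ, h1, h2, h3⟩ := H.root hκ.1
  rw [dim_eq H.hq h1 h2 H.hW hκ h3]
  have hρ0 : 0 < ρ := H.hq.trans_le h1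
  have hl := Real.log_neg H.hq H.hq1
  have main : ∀ p ∈ Set.Ioo ρ 1, ENNReal.ofReal (Real.log p / Real.log q) ≤ D := by
    rintro p ⟨hp, hp1⟩
    have hp0 : 0 < p := hρ0.trans hp
    have hV : 1 < VV m p κ := by rw [← h3]; exact VV_mono hρ0 hp hp1 hκ.1
    have hlim : Tendsto (fun N : ℕ => p ^ N * ((m : ℝ) / (1 - p))) atTop (nhds 0) := by
      have := (tendsto_pow_atTop_nhds_zero_of_lt_one hp0.le hp1).mul_const ((m : ℝ) / (1 - p))
      simpa using this
    obtain ⟨n, hn⟩ := (hlim.eventually (gt_mem_nhds (sub_pos.2 hV))).exists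
    obtain ⟨e, he, hke, hag⟩ := exists_per hκ n
    have k3 := VV_agree_abs (m := m) hp0 hp1 hag
    have k4 : p ^ (LL κ n) ≤ p ^ n := pow_le_pow_of_le_one hp0.le hp1.le (le_LL _ _)
    have k5 : (0 : ℝ) ≤ (m : ℝ) / (1 - p) := div_nonneg (Nat.cast_nonneg m) (by linarith)
    have k6 := mul_le_mul_of_nonneg_right k4 k5
    have k7 := le_abs_self (VV m p κ - VV m p e)
    have k8 : 1 < VV m p e := by linarith
    obtain ⟨σ, g1, g2, g3⟩ := H.root he.1
    have hσ0 : 0 < σ := H.hq.trans_le g1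
    have k9 : σ < p := by
      by_contra hc
      rcases (not_lt.1 hc).eq_or_lt with e1 | e1
      · rw [e1] at k8; linarith
      · have := VV_mono hp0 e1 g2 he.1
        linarith
    refine le_trans ?_ (hD e he hke)
    rw [dim_eq H.hq g1 g2 H.hW he g3]
    exact ENNReal.ofReal_le_ofReal (div_le_div_of_nonpos_of_le hl.le (Real.log_le_log hσ0 k9.le))
  have ht : Tendsto (fun p => ENNReal.ofReal (Real.log p / Real.log q)) (nhdsWithin ρ (Set.Ioi ρ))
      (nhds (ENNReal.ofReal (Real.log ρ / Real.log q))) := by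
    refine ENNReal.tendsto_ofReal ?_
    exact (((Real.continuousAt_log hρ0.ne').div_const _).tendsto).mono_left nhdsWithin_le_nhds
  refine le_of_tendsto ht ?_
  filter_upwards [Ioo_mem_nhdsGT h2] with p hp
  exact main p hp

lemma Hy.dim_B (H : Hy m q β) {t : ℝ} (ht : t ∈ Bset β) {r : ℝ} (hr : 0 < r) :
    dimH (Bset β ∩ Set.Ioo t (t + r)) = dimH (Kset β t) := by
  apply le_antisymm
  · exact dimH_mono (H.B_sub t r)
  · obtain ⟨a, ha, rfl⟩ := H.XX_surj ht.1
    have h := (H.mem_B ha).1 ht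
    rw [H.dim_K ha h.1]
    refine H.lower h.2 fun e _ hlt => ?_
    have := H.embed h.2 hlt hr
    rwa [cz_shift h.1] at this

lemma Hy.main (H : Hy m q β) : Bset β = {t | t ∈ Set.Ico (0 : ℝ) 1 ∧
      Filter.Tendsto (fun r : ℝ => dimH (Bset β ∩ Set.Ioo t (t + r)))
        (nhdsWithin 0 (Set.Ioi 0)) (nhds (dimH (Kset β t))) ∧
      0 < dimH (Kset β t)} := by
  ext t
  constructor
  · intro ht
    refine ⟨ht.1, ?_, ?_⟩
    · refine tendsto_const_nhds.congr' ?_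
      filter_upwards [self_mem_nhdsWithin] with r hr
      exact (H.dim_B ht hr).symm
    · obtain ⟨a, ha, rfl⟩ := H.XX_surj ht.1
      have h := (H.mem_B ha).1 ht
      rw [H.dim_K ha h.1]
      exact H.dim_pos h.2
  · rintro ⟨ht, hlim, hpos⟩
    by_contra hn
    have : ∃ t', t < t' ∧ t' < 1 ∧ dimH (Kset β t') = dimH (Kset β t) := by
      by_contra hc
      push Not at hc
      exact hn ⟨ht, hc⟩
    obtain ⟨t', h1, h2, h3⟩ := this
    have hev : ∀ᶠ r in nhdsWithin (0 : ℝ) (Set.Ioi 0), (0 : ENNReal) =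
        dimH (Bset β ∩ Set.Ioo t (t + r)) := by
      filter_upwards [Ioo_mem_nhdsGT (sub_pos.2 h1)] with r hr
      have : Bset β ∩ Set.Ioo t (t + r) = ∅ := by
        ext s
        simp only [Set.mem_empty_iff_false, iff_false]
        rintro ⟨hs, hs1, hs2⟩
        have hst : s < t' := by linarith [hr.2]
        refine hs.2 t' hst h2 (le_antisymm (dimH_mono (K_anti hst.le)) ?_)
        rw [h3]
        exact dimH_mono (K_anti hs1.le)
      rw [this, dimH_empty]
    have hz := tendsto_nhds_unique hlim (tendsto_const_nhds.congr' hev)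
    exact hpos.ne' hz

end fin

end BT


/-- For a multinacci `β ∈ (1,2)`,
`B_β = {t ∈ [0,1) : lim_{r→0⁺} dim_H(B_β ∩ (t,t+r)) = dim_H K_β(t) > 0}`. -/
theorem stmt_2 (β : ℝ) (hβ : β ∈ Set.Ioo (1 : ℝ) 2) (hmulti : IsMultinacci β) :
    Bset β = {t | t ∈ Set.Ico (0 : ℝ) 1 ∧
      Filter.Tendsto (fun r : ℝ => dimH (Bset β ∩ Set.Ioo t (t + r)))
        (nhdsWithin 0 (Set.Ioi 0)) (nhds (dimH (Kset β t))) ∧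
      0 < dimH (Kset β t)} := by 
  obtain ⟨m, H⟩ := BT.Hy_of hβ hmulti
  exact H.main
end
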